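/- For every ε > 0 there exists C > 0 such that for all real λ ≥ 2 and all L with 1 ≤ L ≤ λ^{1/2}, Σ_{ξ ∈ ℤ², |4π²|ξ|² − λ| > L} (4π²|ξ|² − λ)^{−2} ≤ C · (L^{−1} + λ^{θ+ε} L^{−2}). -/

import Mathlib

open Real Finset

noncomputable section

/-- Huxley's exponent in the circle law. -/
noncomputable def θH : ℝ := 133 / 416

/-- `4π²|ξ|²`. -/
noncomputable def qf (ξ : Fin 2 → ℤ) : ℝ := 4 * Real.pi ^ 2 * ∑ i, (ξ i : ℝ) ^ 2

/-!
After dyadic summation everything rests on the number of lattice points with `4π²|ξ|²` within `K`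
of `λ`. Shiu's method in `ℤ[i]` bounds it by `O_δ(K + λ ^ δ)` for every `δ > 0`, so the exponent of
the circle law never enters. Indeed an interval `(X, X + Y]` contains the norms of only `O_k(Y)`
Gaussian integers as soon as `X + Y ≤ Y ^ k`. Put `D = √Y` and multiply the prime factors of `w` in
order of increasing norm while the product `a` has norm at most `D`; write `w = a * c` and let `q`
be the first prime left out. If `N q ≈ D ^ (1 / r)`, Selberg's sieve saves a factor `r / log D` in
the number of cofactors `c` of a given `a`, each norm is attained at most `exp (O_k(r))` times, and
Rankin's trick bounds the sum of `1 / N a` over the `D ^ (1 / r)`-smooth `a` of norm about `D` by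
`exp (-A * r) * log D` with `A` as large as we please. If `N q` is bounded, `w` has a smooth divisor
of norm `≫ D`, and there are few such `w`.
-/

/-! ### Gaussian integers of given norm -/

/-- The norm `a² + b²` of a Gaussian integer `a + bi`, as a multiplicative map into `ℕ`. -/
def gaussNorm : GaussianInt →*₀ ℕ where
  toFun z := z.norm.natAbs
  map_zero' := by simp
  map_one' := by simp
  map_mul' a b := by simp [Zsqrtd.norm_mul, Int.natAbs_mul]

theorem gaussNorm_eq_natAbs_sq_add (z : GaussianInt) :
    gaussNorm z = z.re.natAbs ^ 2 + z.im.natAbs ^ 2 := by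
  rw [sq, sq]
  exact GaussianInt.natAbs_norm_eq z

theorem gaussNorm_eq_zero {a : GaussianInt} : gaussNorm a = 0 ↔ a = 0 := by
  simp [gaussNorm]

theorem gaussNorm_pos {a : GaussianInt} : 0 < gaussNorm a ↔ a ≠ 0 :=
  Nat.pos_iff_ne_zero.trans gaussNorm_eq_zero.not

theorem gaussNorm_star (a : GaussianInt) : gaussNorm (star a) = gaussNorm a := by
  simp [gaussNorm]

theorem gaussNorm_eq_one {a : GaussianInt} : gaussNorm a = 1 ↔ IsUnit a :=
  Zsqrtd.norm_eq_one_iff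

theorem gaussNorm_natCast (n : ℕ) : gaussNorm (n : GaussianInt) = n ^ 2 := by
  simp [gaussNorm, Int.natAbs_mul, sq]

theorem natCast_gaussNorm (a : GaussianInt) : (gaussNorm a : GaussianInt) = a * star a := by
  rw [← Zsqrtd.norm_eq_mul_conj, ← GaussianInt.abs_natCast_norm a]
  simp [gaussNorm]

theorem two_le_gaussNorm_of_prime {q : GaussianInt} (hq : Prime q) : 2 ≤ gaussNorm q := by
  have hpos := gaussNorm_pos.2 hq.ne_zero
  have hne : gaussNorm q ≠ 1 := fun h => hq.not_isUnit (gaussNorm_eq_one.1 h)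
  omega

/-- The Gaussian integers of norm at most `n`. -/
def normLE (n : ℕ) : Finset GaussianInt :=
  ((Icc (-(n.sqrt : ℤ)) n.sqrt ×ˢ Icc (-(n.sqrt : ℤ)) n.sqrt).image
    fun p : ℤ × ℤ => (⟨p.1, p.2⟩ : GaussianInt)).filter fun z => gaussNorm z ≤ n

theorem mem_normLE {n : ℕ} {z : GaussianInt} : z ∈ normLE n ↔ gaussNorm z ≤ n := by
  refine mem_filter.trans ⟨And.right, fun hz => ⟨mem_image.2 ⟨(z.re, z.im), ?_, rfl⟩, hz⟩⟩
  rw [gaussNorm_eq_natAbs_sq_add] at hz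
  have hre : z.re.natAbs ≤ n.sqrt := Nat.le_sqrt'.2 (by omega)
  have him : z.im.natAbs ≤ n.sqrt := Nat.le_sqrt'.2 (by omega)
  simp only [mem_product, mem_Icc]
  omega

theorem card_normLE_le {n : ℕ} (hn : 1 ≤ n) : #(normLE n) ≤ 9 * n := by
  have hbox : #(normLE n) ≤ (2 * n.sqrt + 1) * (2 * n.sqrt + 1) := by
    refine (card_filter_le _ _).trans (card_image_le.trans_eq ?_)
    rw [card_product, Int.card_Icc]
    congr 1 <;> omega
  have hsq : n.sqrt * n.sqrt ≤ n := Nat.sqrt_le n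
  nlinarith [Nat.le_sqrt.2 (by omega : 1 * 1 ≤ n)]

/-- The Gaussian integers of norm exactly `n`. -/
def normEq (n : ℕ) : Finset GaussianInt := (normLE n).filter fun z => gaussNorm z = n

theorem mem_normEq {n : ℕ} {z : GaussianInt} : z ∈ normEq n ↔ gaussNorm z = n := by
  rw [normEq, mem_filter, mem_normLE]
  exact ⟨And.right, fun h => ⟨h.le, h⟩⟩

theorem card_normEq_one_le : #(normEq 1) ≤ 4 := by
  have hunits : normEq 1 ⊆ ({⟨1, 0⟩, ⟨-1, 0⟩, ⟨0, 1⟩, ⟨0, -1⟩} : Finset GaussianInt) := by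
    intro z hz
    rw [mem_normEq, gaussNorm_eq_natAbs_sq_add] at hz
    have hre : z.re.natAbs ≤ 1 := by nlinarith
    have him : z.im.natAbs ≤ 1 := by nlinarith
    have hcases : (z.re.natAbs = 0 ∧ z.im.natAbs = 1) ∨ (z.re.natAbs = 1 ∧ z.im.natAbs = 0) := by
      generalize z.re.natAbs = u at *
      generalize z.im.natAbs = v at *
      interval_cases u <;> interval_cases v <;> simp_all
    simp only [mem_insert, mem_singleton, Zsqrtd.ext_iff]
    omega
  exact (card_le_card hunits).trans card_le_four

theorem exists_prime_dvd_natCast {p : ℕ} (hp : p.Prime) :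
    ∃ q : GaussianInt, Prime q ∧ q ∣ (p : GaussianInt) := by
  have hnorm := gaussNorm_natCast p
  have hp2 := hp.two_le
  have hne : (p : GaussianInt) ≠ 0 := by
    rw [← gaussNorm_pos, hnorm]
    positivity
  have hunit : ¬ IsUnit (p : GaussianInt) := by
    rw [← gaussNorm_eq_one, hnorm]
    nlinarith
  obtain ⟨q, hq, hqp⟩ := WfDvdMonoid.exists_irreducible_factor hunit hne
  exact ⟨q, hq.prime, hqp⟩

theorem exists_natPrime_of_prime {q : GaussianInt} (hq : Prime q) :
    ∃ p : ℕ, p.Prime ∧ (gaussNorm q = p ∨ gaussNorm q = p ^ 2) := by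
  have hdvd : q ∣ (((gaussNorm q).primeFactorsList.map (Nat.cast : ℕ → GaussianInt)).prod) := by
    rw [← Nat.cast_list_prod, Nat.prod_primeFactorsList (gaussNorm_pos.2 hq.ne_zero).ne',
      natCast_gaussNorm]
    exact dvd_mul_right _ _
  obtain ⟨x, hx, hqx⟩ := hq.dvd_prod_iff.1 hdvd
  obtain ⟨p, hp, rfl⟩ := List.mem_map.1 hx
  have hp := Nat.prime_of_mem_primeFactorsList hp
  have hnorm := map_dvd gaussNorm hqx
  rw [gaussNorm_natCast, Nat.dvd_prime_pow hp] at hnorm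
  obtain ⟨k, hk, hqk⟩ := hnorm
  have hq2 := two_le_gaussNorm_of_prime hq
  refine ⟨p, hp, ?_⟩
  interval_cases k
  · simp only [pow_zero] at hqk
    omega
  · exact Or.inl (by simpa using hqk)
  · exact Or.inr hqk

theorem gaussNorm_eq_minFac_or_sq {q : GaussianInt} (hq : Prime q) :
    gaussNorm q = (gaussNorm q).minFac ∨ gaussNorm q = (gaussNorm q).minFac ^ 2 := by
  obtain ⟨p, hp, h | h⟩ := exists_natPrime_of_prime hq <;> rw [h]
  · exact Or.inl hp.minFac_eq.symm
  · exact Or.inr (by rw [hp.pow_minFac two_ne_zero])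

theorem dvd_or_star_dvd_of_dvd_gaussNorm {q z : GaussianInt} {p : ℕ} (hq : Prime q)
    (hqp : q ∣ (p : GaussianInt)) (hpz : p ∣ gaussNorm z) : q ∣ z ∨ star q ∣ z := by
  have hdvd : q ∣ z * star z := by
    rw [← natCast_gaussNorm]
    exact hqp.trans (Nat.cast_dvd_cast hpz)
  refine (hq.dvd_or_dvd hdvd).imp_right ?_
  rintro ⟨c, hc⟩
  exact ⟨star c, by rw [← star_star z, hc, star_mul, mul_comm]⟩

theorem card_normEq_le_two_mul {n p : ℕ} {q : GaussianInt} (hq : Prime q)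
    (hqp : q ∣ (p : GaussianInt)) (hpn : p ∣ n) :
    #(normEq n) ≤ 2 * #(normEq (n / gaussNorm q)) := by
  have hquot : ∀ d c : GaussianInt, gaussNorm d = gaussNorm q → gaussNorm (d * c) = n →
      c ∈ normEq (n / gaussNorm q) := by
    rintro d c hd rfl
    rw [mem_normEq, map_mul, hd, Nat.mul_div_cancel_left _ (gaussNorm_pos.2 hq.ne_zero)]
  have hsub : normEq n ⊆ (normEq (n / gaussNorm q)).image (q * ·) ∪
      (normEq (n / gaussNorm q)).image (star q * ·) := by
    intro z hz
    rw [mem_normEq] at hz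
    rw [mem_union, mem_image, mem_image]
    rcases dvd_or_star_dvd_of_dvd_gaussNorm hq hqp (hz ▸ hpn) with ⟨c, rfl⟩ | ⟨c, rfl⟩
    · exact Or.inl ⟨c, hquot q c rfl hz, rfl⟩
    · exact Or.inr ⟨c, hquot _ c (gaussNorm_star q) hz, rfl⟩
  refine (card_le_card hsub).trans ((card_union_le _ _).trans ?_)
  rw [two_mul]
  exact add_le_add card_image_le card_image_le

theorem card_normEq_le (n : ℕ) (hn : n ≠ 0) :
    #(normEq n) ≤ 4 * 2 ^ ArithmeticFunction.cardFactors n := by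
  induction n using Nat.strong_induction_on with | _ n ih =>
  rcases eq_or_ne n 1 with rfl | hn1
  · simpa using card_normEq_one_le
  rcases (normEq n).eq_empty_or_nonempty with hempty | ⟨z, hz⟩
  · simp [hempty]
  obtain ⟨q, hq, hqp⟩ := exists_prime_dvd_natCast (Nat.minFac_prime hn1)
  have hq2 := two_le_gaussNorm_of_prime hq
  obtain ⟨m, rfl⟩ : gaussNorm q ∣ n := by
    rw [mem_normEq] at hz
    have hpz : n.minFac ∣ gaussNorm z := by rw [hz]; exact n.minFac_dvd
    rw [← hz]
    rcases dvd_or_star_dvd_of_dvd_gaussNorm hq hqp hpz with h | h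
    · exact map_dvd gaussNorm h
    · exact gaussNorm_star q ▸ map_dvd gaussNorm h
  have hm : m ≠ 0 := right_ne_zero_of_mul hn
  have hlt : m < gaussNorm q * m := by nlinarith [Nat.pos_of_ne_zero hm]
  have hΩ : 1 ≤ ArithmeticFunction.cardFactors (gaussNorm q) :=
    ArithmeticFunction.cardFactors_pos_iff_one_lt.2 hq2
  have hstep := card_normEq_le_two_mul hq hqp (Nat.minFac_dvd _)
  rw [Nat.mul_div_cancel_left _ (by omega)] at hstep
  calc #(normEq (gaussNorm q * m)) ≤ 2 * (4 * 2 ^ ArithmeticFunction.cardFactors m) :=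
        hstep.trans (by gcongr; exact ih m hlt hm)
    _ = 4 * 2 ^ (1 + ArithmeticFunction.cardFactors m) := by ring
    _ ≤ _ := by
        rw [ArithmeticFunction.cardFactors_mul (by omega) hm]
        gcongr
        norm_num

/-! ### Harmonic sums and Mertens bounds over `ℤ[i]` -/

/-- The sup norm `max |a| |b|` of `a + bi`, whose level sets are the square boxes of `ℤ²`. -/
def gaussSupNorm (a : GaussianInt) : ℕ := max a.re.natAbs a.im.natAbs

theorem gaussSupNorm_eq_zero {a : GaussianInt} : gaussSupNorm a = 0 ↔ a = 0 := by
  simp [gaussSupNorm, Zsqrtd.ext_iff]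

theorem gaussSupNorm_sq_le (a : GaussianInt) : gaussSupNorm a ^ 2 ≤ gaussNorm a := by
  rw [gaussNorm_eq_natAbs_sq_add, gaussSupNorm]
  rcases max_choice a.re.natAbs a.im.natAbs with h | h <;> rw [h] <;> omega

theorem card_gaussSupNorm_eq_le (S : Finset GaussianInt) {m : ℕ} (hm : m ≠ 0) :
    #{a ∈ S | gaussSupNorm a = m} ≤ 8 * m := by
  rw [← Int.card_box hm]
  refine card_le_card_of_injOn (fun a => (a.re, a.im)) (fun a ha => ?_) (fun a _ b _ h => ?_)
  · exact Int.mem_box.2 (mem_filter.1 (mem_coe.1 ha)).2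
  · exact Zsqrtd.ext (congrArg Prod.fst h) (congrArg Prod.snd h)

theorem sum_gaussNorm_inv_le (n : ℕ) :
    ∑ a ∈ normLE n with a ≠ 0, (gaussNorm a : ℝ)⁻¹ ≤ 8 * (1 + Real.log n) := by
  have hmaps : ∀ a ∈ (normLE n).filter (· ≠ 0), gaussSupNorm a ∈ Icc 1 n := by
    intro a ha
    obtain ⟨han, ha0⟩ := mem_filter.1 ha
    refine mem_Icc.2 ⟨Nat.one_le_iff_ne_zero.2 (gaussSupNorm_eq_zero.not.2 ha0), ?_⟩
    exact (Nat.le_self_pow two_ne_zero _).trans ((gaussSupNorm_sq_le a).trans (mem_normLE.1 han))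
  rw [← sum_fiberwise_of_maps_to hmaps]
  calc _ ≤ ∑ m ∈ Icc 1 n, 8 * (m : ℝ)⁻¹ := by
        refine sum_le_sum fun m hm => ?_
        have hm0 : (0 : ℝ) < m := by exact_mod_cast (mem_Icc.1 hm).1
        refine (sum_le_card_nsmul _ _ ((m : ℝ) ^ 2)⁻¹ fun a ha => ?_).trans ?_
        · refine inv_anti₀ (by positivity) ?_
          rw [← (mem_filter.1 ha).2]
          exact_mod_cast gaussSupNorm_sq_le a
        · calc _ ≤ (8 * m : ℝ) * ((m : ℝ) ^ 2)⁻¹ := by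
                rw [nsmul_eq_mul]
                gcongr
                exact_mod_cast card_gaussSupNorm_eq_le _ (Nat.cast_pos.1 hm0).ne'
            _ = 8 * (m : ℝ)⁻¹ := by field_simp
    _ = 8 * (harmonic n : ℝ) := by
        rw [← mul_sum, harmonic_eq_sum_Icc]
        push_cast
        rfl
    _ ≤ _ := by gcongr; exact harmonic_le_one_add_log n

theorem sum_log_primeFactors_le {k : ℕ} (hk : k ≠ 0) :
    ∑ p ∈ k.primeFactors, Real.log p ≤ Real.log k := by
  have hpos : ∀ p ∈ k.primeFactors, (0 : ℝ) < p := fun p hp =>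
    Nat.cast_pos.2 (Nat.prime_of_mem_primeFactors hp).pos
  rw [← Real.log_prod fun p hp => (hpos p hp).ne', ← Nat.cast_prod]
  refine Real.log_le_log ?_ ?_
  · rw [Nat.cast_prod]
    exact prod_pos hpos
  · exact_mod_cast Nat.le_of_dvd (Nat.pos_of_ne_zero hk) (Nat.prod_primeFactors_dvd k)

theorem sum_log_prime_mul_div_le (n : ℕ) :
    ∑ p ∈ Ioc 0 n with p.Prime, Real.log p * (n / p : ℕ) ≤ n * Real.log n := by
  calc _ = ∑ p ∈ Ioc 0 n with p.Prime, ∑ k ∈ Ioc 0 n, if p ∣ k then Real.log p else 0 := by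
        refine sum_congr rfl fun p _ => ?_
        rw [← sum_filter, sum_const, nsmul_eq_mul, Nat.Ioc_filter_dvd_card_eq_div, mul_comm]
    _ = ∑ k ∈ Ioc 0 n, ∑ p ∈ Ioc 0 n with p.Prime, if p ∣ k then Real.log p else 0 := sum_comm
    _ ≤ ∑ _k ∈ Ioc 0 n, Real.log n := by
        refine sum_le_sum fun k hk => ?_
        obtain ⟨hk0, hkn⟩ := mem_Ioc.1 hk
        rw [← sum_filter]
        calc _ ≤ ∑ p ∈ k.primeFactors, Real.log p := by
              refine sum_le_sum_of_subset_of_nonneg (fun p hp => ?_) fun p _ _ =>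
                Real.log_natCast_nonneg p
              simp only [mem_filter] at hp
              exact Nat.mem_primeFactors.2 ⟨hp.1.2, hp.2, hk0.ne'⟩
          _ ≤ Real.log k := sum_log_primeFactors_le hk0.ne'
          _ ≤ Real.log n := by gcongr
    _ = n * Real.log n := by simp

theorem sum_log_prime_div_le (n : ℕ) (hn : n ≠ 0) :
    ∑ p ∈ Ioc 0 n with p.Prime, Real.log p / p ≤ Real.log n + Real.log 4 := by
  have hn0 : (0 : ℝ) < n := by positivity
  have htheta : ∑ p ∈ Ioc 0 n with p.Prime, Real.log p ≤ Real.log 4 * n := by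
    have := Chebyshev.theta_le_log4_mul_x (x := n) hn0.le
    rwa [Chebyshev.theta, Nat.floor_natCast] at this
  refine le_of_mul_le_mul_left ?_ hn0
  calc (n : ℝ) * ∑ p ∈ Ioc 0 n with p.Prime, Real.log p / p
      ≤ ∑ p ∈ Ioc 0 n with p.Prime, Real.log p * (((n / p : ℕ) : ℝ) + 1) := by
        rw [mul_sum]
        refine sum_le_sum fun p _ => ?_
        have hfloor : (n : ℝ) / p ≤ ((n / p : ℕ) : ℝ) + 1 := by
          rw [← Nat.floor_div_eq_div (K := ℝ)]
          exact (Nat.lt_floor_add_one _).le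
        have := Real.log_natCast_nonneg p
        calc (n : ℝ) * (Real.log p / p) = Real.log p * ((n : ℝ) / p) := by ring
          _ ≤ _ := by gcongr
    _ = ∑ p ∈ Ioc 0 n with p.Prime, Real.log p * (n / p : ℕ) +
          ∑ p ∈ Ioc 0 n with p.Prime, Real.log p := by
        rw [← sum_add_distrib]
        exact sum_congr rfl fun p _ => by ring
    _ ≤ n * Real.log n + Real.log 4 * n := add_le_add (sum_log_prime_mul_div_le n) htheta
    _ = n * (Real.log n + Real.log 4) := by ring

open scoped Classical in
/-- The Gaussian primes of norm at most `n`, all four associates of each being listed. -/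
def gaussPrimesLE (n : ℕ) : Finset GaussianInt := (normLE n).filter Prime

theorem mem_gaussPrimesLE {n : ℕ} {q : GaussianInt} :
    q ∈ gaussPrimesLE n ↔ gaussNorm q ≤ n ∧ Prime q := by
  simp only [gaussPrimesLE, mem_filter, mem_normLE]

theorem card_gaussPrimesLE_minFac_le (n : ℕ) {p : ℕ} (hp : p.Prime) :
    #{q ∈ gaussPrimesLE n | (gaussNorm q).minFac = p} ≤ 24 := by
  have hsub : {q ∈ gaussPrimesLE n | (gaussNorm q).minFac = p} ⊆ normEq p ∪ normEq (p ^ 2) := by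
    intro q hq
    simp only [mem_filter, mem_gaussPrimesLE] at hq
    rw [mem_union, mem_normEq, mem_normEq]
    have h := gaussNorm_eq_minFac_or_sq hq.1.2
    rwa [hq.2] at h
  have hone := card_normEq_le p hp.ne_zero
  have htwo := card_normEq_le (p ^ 2) (pow_ne_zero _ hp.ne_zero)
  rw [ArithmeticFunction.cardFactors_apply_prime hp] at hone
  rw [ArithmeticFunction.cardFactors_apply_prime_pow hp] at htwo
  exact (card_le_card hsub).trans ((card_union_le _ _).trans (by omega))

theorem log_div_gaussNorm_le_log_div_minFac {q : GaussianInt} (hq : Prime q) :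
    Real.log (gaussNorm q) / gaussNorm q ≤
      Real.log (gaussNorm q).minFac / (gaussNorm q).minFac := by
  have hp : (gaussNorm q).minFac.Prime :=
    Nat.minFac_prime (by have := two_le_gaussNorm_of_prime hq; omega)
  have h := gaussNorm_eq_minFac_or_sq hq
  generalize (gaussNorm q).minFac = p at *
  have hp2 : (2 : ℝ) ≤ p := by exact_mod_cast hp.two_le
  have := Real.log_natCast_nonneg p
  rcases h with h | h <;> rw [h]
  calc Real.log ((p ^ 2 : ℕ) : ℝ) / ((p ^ 2 : ℕ) : ℝ) = Real.log p / p * (2 / p) := by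
        push_cast
        rw [Real.log_pow]
        push_cast
        ring
    _ ≤ Real.log p / p * 1 := by
        gcongr
        exact div_le_one_of_le₀ hp2 (by positivity)
    _ = Real.log p / p := mul_one _

theorem sum_log_gaussNorm_div_le (n : ℕ) (hn : n ≠ 0) :
    ∑ q ∈ gaussPrimesLE n, Real.log (gaussNorm q) / gaussNorm q ≤
      24 * (Real.log n + Real.log 4) := by
  have hmaps : ∀ q ∈ gaussPrimesLE n,
      (gaussNorm q).minFac ∈ (Ioc 0 n).filter Nat.Prime := by
    intro q hq
    obtain ⟨hqn, hq⟩ := mem_gaussPrimesLE.1 hq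
    have hq2 := two_le_gaussNorm_of_prime hq
    exact mem_filter.2 ⟨mem_Ioc.2 ⟨Nat.minFac_pos _, (Nat.minFac_le (by omega)).trans hqn⟩,
      Nat.minFac_prime (by omega)⟩
  rw [← sum_fiberwise_of_maps_to hmaps]
  calc _ ≤ ∑ p ∈ Ioc 0 n with p.Prime, 24 * (Real.log p / p) := by
        refine sum_le_sum fun p hp => ?_
        have hcard := card_gaussPrimesLE_minFac_le n (mem_filter.1 hp).2
        have := Real.log_natCast_nonneg p
        calc _ ≤ ∑ q ∈ gaussPrimesLE n with (gaussNorm q).minFac = p, Real.log p / p := by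
              refine sum_le_sum fun q hq => ?_
              obtain ⟨hq, hqp⟩ := mem_filter.1 hq
              exact hqp ▸ log_div_gaussNorm_le_log_div_minFac (mem_gaussPrimesLE.1 hq).2
          _ = #{q ∈ gaussPrimesLE n | (gaussNorm q).minFac = p} * (Real.log p / p) := by
              rw [sum_const, nsmul_eq_mul]
          _ ≤ _ := by gcongr; exact_mod_cast hcard
    _ ≤ _ := by
        rw [← mul_sum]
        gcongr
        exact sum_log_prime_div_le n hn

/-! ### Smooth Gaussian integers -/

/-- `a` is a nonzero Gaussian integer all of whose prime divisors have norm at most `m`. -/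
def IsSmooth (m : ℕ) (a : GaussianInt) : Prop :=
  a ≠ 0 ∧ ∀ q : GaussianInt, Prime q → q ∣ a → gaussNorm q ≤ m

theorem IsSmooth.of_dvd {m : ℕ} {a d : GaussianInt} (ha : IsSmooth m a) (hd : d ∣ a) :
    IsSmooth m d :=
  ⟨ne_zero_of_dvd_ne_zero ha.1 hd, fun q hq hqd => ha.2 q hq (hqd.trans hd)⟩

open scoped Classical in
/-- The `m`-smooth Gaussian integers of norm at most `n`. -/
def smoothLE (m n : ℕ) : Finset GaussianInt := (normLE n).filter (IsSmooth m)

theorem mem_smoothLE {m n : ℕ} {a : GaussianInt} :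
    a ∈ smoothLE m n ↔ gaussNorm a ≤ n ∧ IsSmooth m a := by
  simp only [smoothLE, mem_filter, mem_normLE]

theorem log_gaussNorm_le_sum_multiplicity {m : ℕ} {a : GaussianInt} (ha : IsSmooth m a) :
    Real.log (gaussNorm a) ≤ ∑ q ∈ gaussPrimesLE m, multiplicity q a * Real.log (gaussNorm q) := by
  induction a using UniqueFactorizationMonoid.induction_on_prime with
  | h₁ => exact absurd rfl ha.1
  | h₂ u hu =>
    rw [gaussNorm_eq_one.2 hu, Nat.cast_one, Real.log_one]
    exact sum_nonneg fun q _ => mul_nonneg (Nat.cast_nonneg _) (Real.log_natCast_nonneg _)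
  | h₃ a p ha0 hp ih =>
    have hpm : p ∈ gaussPrimesLE m := mem_gaussPrimesLE.2 ⟨ha.2 p hp (dvd_mul_right _ _), hp⟩
    have hsplit : ∀ q ∈ gaussPrimesLE m,
        (multiplicity q (p * a) : ℝ) * Real.log (gaussNorm q) =
        multiplicity q p * Real.log (gaussNorm q) + multiplicity q a * Real.log (gaussNorm q) := by
      intro q hq
      have hq := (mem_gaussPrimesLE.1 hq).2
      rw [multiplicity_mul hq (FiniteMultiplicity.of_prime_left hq (mul_ne_zero hp.ne_zero ha0))]
      push_cast
      ring
    have hp_le : Real.log (gaussNorm p) ≤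
        ∑ q ∈ gaussPrimesLE m, multiplicity q p * Real.log (gaussNorm q) := by
      refine le_trans ?_ (single_le_sum (f := fun q : GaussianInt =>
        (multiplicity q p : ℝ) * Real.log (gaussNorm q))
        (fun q _ => mul_nonneg (Nat.cast_nonneg _) (Real.log_natCast_nonneg _)) hpm)
      simp [multiplicity_self]
    rw [map_mul, Nat.cast_mul, Real.log_mul (Nat.cast_ne_zero.2 (gaussNorm_pos.2 hp.ne_zero).ne')
      (Nat.cast_ne_zero.2 (gaussNorm_pos.2 ha0).ne'), sum_congr rfl hsplit, sum_add_distrib]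
    exact add_le_add hp_le (ih (ha.of_dvd (dvd_mul_left _ _)))

open scoped Classical in
theorem multiplicity_eq_card_pow_dvd {q a : GaussianInt} (hq : Prime q) (ha : a ≠ 0) {n : ℕ}
    (hn : gaussNorm a ≤ n) : multiplicity q a = #{j ∈ range n | q ^ (j + 1) ∣ a} := by
  have hfin := FiniteMultiplicity.of_prime_left hq ha
  have hlt : multiplicity q a < n := by
    have hdvd := map_dvd gaussNorm (pow_multiplicity_dvd q a)
    rw [map_pow] at hdvd
    calc multiplicity q a < 2 ^ multiplicity q a := Nat.lt_two_pow_self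
      _ ≤ gaussNorm q ^ multiplicity q a := Nat.pow_le_pow_left (two_le_gaussNorm_of_prime hq) _
      _ ≤ n := (Nat.le_of_dvd (gaussNorm_pos.2 ha) hdvd).trans hn
  have hrange : {j ∈ range n | q ^ (j + 1) ∣ a} = range (multiplicity q a) := by
    ext j
    rw [mem_filter, mem_range, mem_range, hfin.pow_dvd_iff_le_multiplicity]
    omega
  rw [hrange, card_range]

/-- The sum of `N(a)^(t-1)` over the `m`-smooth `a` of norm at most `n`: the harmonic sum over
smooth numbers, tilted by `N(a)^t` as in Rankin's trick. -/
def smoothMoment (m n : ℕ) (t : ℝ) : ℝ := ∑ a ∈ smoothLE m n, (gaussNorm a : ℝ) ^ (t - 1)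

theorem smoothMoment_nonneg (m n : ℕ) (t : ℝ) : 0 ≤ smoothMoment m n t :=
  sum_nonneg fun _ _ => by positivity

theorem smoothMoment_zero_le (m n : ℕ) : smoothMoment m n 0 ≤ 8 * (1 + Real.log n) := by
  refine le_trans ?_ (sum_gaussNorm_inv_le n)
  simp only [smoothMoment, zero_sub, Real.rpow_neg_one]
  refine sum_le_sum_of_subset_of_nonneg (fun a ha => ?_) fun a _ _ => by positivity
  rw [mem_smoothLE] at ha
  exact mem_filter.2 ⟨mem_normLE.2 ha.1, ha.2.1⟩

open scoped Classical in
theorem sum_smoothLE_dvd_le (m n : ℕ) (t : ℝ) {d : GaussianInt} (hd : d ≠ 0) :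
    ∑ a ∈ smoothLE m n with d ∣ a, (gaussNorm a : ℝ) ^ (t - 1) ≤
      (gaussNorm d : ℝ) ^ (t - 1) * smoothMoment m n t := by
  have hsub : {a ∈ smoothLE m n | d ∣ a} ⊆ (smoothLE m n).image (d * ·) := by
    intro a ha
    rw [mem_filter, mem_smoothLE] at ha
    obtain ⟨⟨hle, hsmooth⟩, c, rfl⟩ := ha
    have hc : IsSmooth m c := hsmooth.of_dvd (dvd_mul_left c d)
    refine mem_image.2 ⟨c, mem_smoothLE.2 ⟨?_, hc⟩, rfl⟩
    have hcd := map_dvd gaussNorm (dvd_mul_left c d)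
    exact (Nat.le_of_dvd (gaussNorm_pos.2 hsmooth.1) hcd).trans hle
  calc _ ≤ ∑ a ∈ (smoothLE m n).image (d * ·), (gaussNorm a : ℝ) ^ (t - 1) :=
        sum_le_sum_of_subset_of_nonneg hsub fun a _ _ => by positivity
    _ = ∑ c ∈ smoothLE m n, (gaussNorm (d * c) : ℝ) ^ (t - 1) :=
        sum_image fun a _ b _ h => mul_left_cancel₀ hd h
    _ = _ := by
        rw [smoothMoment, mul_sum]
        refine sum_congr rfl fun c _ => ?_
        rw [map_mul, Nat.cast_mul, Real.mul_rpow (by positivity) (by positivity)]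

/-- A bound for the logarithmic derivative of `smoothMoment m n` on `t ≤ b`: the logarithmic
derivative at `b` of the Euler product over the primes of norm at most `m`. -/
def eulerLogDeriv (m : ℕ) (b : ℝ) : ℝ :=
  ∑ q ∈ gaussPrimesLE m,
    Real.log (gaussNorm q) * ((gaussNorm q : ℝ) ^ (b - 1) / (1 - (gaussNorm q : ℝ) ^ (b - 1)))

theorem sum_pow_succ_le_div {r : ℝ} (hr0 : 0 ≤ r) (hr1 : r < 1) (n : ℕ) :
    ∑ j ∈ range n, r ^ (j + 1) ≤ r / (1 - r) := by
  rw [div_eq_mul_inv, ← tsum_geometric_of_lt_one hr0 hr1]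
  simp only [pow_succ', ← mul_sum]
  gcongr
  exact (summable_geometric_of_lt_one hr0 hr1).sum_le_tsum _ fun j _ => by positivity

open scoped Classical in
theorem sum_range_sum_smoothLE_pow_dvd_le (m n : ℕ) {t b : ℝ} (htb : t ≤ b) (hb : b < 1)
    {q : GaussianInt} (hq : Prime q) :
    ∑ j ∈ range n, ∑ a ∈ smoothLE m n with q ^ (j + 1) ∣ a, (gaussNorm a : ℝ) ^ (t - 1) ≤
      (gaussNorm q : ℝ) ^ (b - 1) / (1 - (gaussNorm q : ℝ) ^ (b - 1)) * smoothMoment m n t := by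
  have hq2 : (2 : ℝ) ≤ gaussNorm q := by exact_mod_cast two_le_gaussNorm_of_prime hq
  have hM := smoothMoment_nonneg m n t
  calc _ ≤ ∑ j ∈ range n, ((gaussNorm q : ℝ) ^ (b - 1)) ^ (j + 1) * smoothMoment m n t := by
        refine sum_le_sum fun j _ => ?_
        refine (sum_smoothLE_dvd_le m n t (pow_ne_zero (j + 1) hq.ne_zero)).trans ?_
        rw [map_pow, Nat.cast_pow, ← Real.rpow_pow_comm (by positivity)]
        gcongr
        linarith
    _ ≤ _ := by
        rw [← sum_mul]
        gcongr
        exact sum_pow_succ_le_div (by positivity)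
          (Real.rpow_lt_one_of_one_lt_of_neg (by linarith) (by linarith)) n

theorem sum_log_mul_rpow_smoothLE_le (m n : ℕ) {t b : ℝ} (htb : t ≤ b) (hb : b < 1) :
    ∑ a ∈ smoothLE m n, Real.log (gaussNorm a) * (gaussNorm a : ℝ) ^ (t - 1) ≤
      eulerLogDeriv m b * smoothMoment m n t := by
  classical
  calc _ ≤ ∑ a ∈ smoothLE m n, ∑ q ∈ gaussPrimesLE m, ∑ j ∈ range n,
          if q ^ (j + 1) ∣ a then Real.log (gaussNorm q) * (gaussNorm a : ℝ) ^ (t - 1) else 0 := by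
        refine sum_le_sum fun a ha => ?_
        obtain ⟨han, hsmooth⟩ := mem_smoothLE.1 ha
        refine (mul_le_mul_of_nonneg_right (log_gaussNorm_le_sum_multiplicity hsmooth)
          (by positivity)).trans_eq ?_
        rw [sum_mul]
        refine sum_congr rfl fun q hq => ?_
        rw [multiplicity_eq_card_pow_dvd (mem_gaussPrimesLE.1 hq).2 hsmooth.1 han, ← sum_filter,
          sum_const, nsmul_eq_mul, mul_assoc]
    _ = ∑ q ∈ gaussPrimesLE m, Real.log (gaussNorm q) * ∑ j ∈ range n,
          ∑ a ∈ smoothLE m n with q ^ (j + 1) ∣ a, (gaussNorm a : ℝ) ^ (t - 1) := by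
        rw [sum_comm]
        refine sum_congr rfl fun q _ => ?_
        rw [sum_comm, mul_sum]
        refine sum_congr rfl fun j _ => ?_
        rw [mul_sum, sum_filter]
    _ ≤ _ := by
        rw [eulerLogDeriv, sum_mul]
        refine sum_le_sum fun q hq => ?_
        rw [mul_assoc]
        exact mul_le_mul_of_nonneg_left
          (sum_range_sum_smoothLE_pow_dvd_le m n htb hb (mem_gaussPrimesLE.1 hq).2)
          (Real.log_natCast_nonneg _)

theorem hasDerivAt_smoothMoment (m n : ℕ) (t : ℝ) :
    HasDerivAt (smoothMoment m n)
      (∑ a ∈ smoothLE m n, Real.log (gaussNorm a) * (gaussNorm a : ℝ) ^ (t - 1)) t := by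
  refine HasDerivAt.fun_sum fun a ha => ?_
  have hpos : (0 : ℝ) < gaussNorm a := Nat.cast_pos.2 (gaussNorm_pos.2 (mem_smoothLE.1 ha).2.1)
  simpa using ((hasDerivAt_id t).sub_const 1).const_rpow hpos

theorem le_exp_mul_of_hasDerivAt_le_mul {f f' : ℝ → ℝ} {K b : ℝ} (hb : 0 ≤ b)
    (hf : ∀ t, HasDerivAt f (f' t) t) (hbound : ∀ t ≤ b, f' t ≤ K * f t) :
    f b ≤ Real.exp (K * b) * f 0 := by
  have hderiv : ∀ t, HasDerivAt (fun t => f t * Real.exp (-(K * t)))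
      (f' t * Real.exp (-(K * t)) + f t * (Real.exp (-(K * t)) * -K)) t := by
    intro t
    refine (hf t).mul ?_
    simpa using ((hasDerivAt_id t).const_mul K).neg.exp
  have hanti : AntitoneOn (fun t => f t * Real.exp (-(K * t))) (Set.Icc 0 b) := by
    refine antitoneOn_of_deriv_nonpos (convex_Icc 0 b)
      (fun t _ => (hderiv t).continuousAt.continuousWithinAt)
      (fun t _ => (hderiv t).differentiableAt.differentiableWithinAt) fun t ht => ?_
    rw [interior_Icc] at ht
    rw [(hderiv t).deriv]
    nlinarith [mul_le_mul_of_nonneg_right (hbound t ht.2.le) (Real.exp_pos (-(K * t))).le]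
  have h := hanti (Set.left_mem_Icc.2 hb) (Set.right_mem_Icc.2 hb) hb
  simp only [mul_zero, neg_zero, Real.exp_zero, mul_one] at h
  rw [Real.exp_neg, mul_inv_le_iff₀ (Real.exp_pos _)] at h
  linarith

theorem smoothMoment_le (m n : ℕ) {b : ℝ} (hb0 : 0 ≤ b) (hb : b < 1) :
    smoothMoment m n b ≤ Real.exp (eulerLogDeriv m b * b) * (8 * (1 + Real.log n)) := by
  refine (le_exp_mul_of_hasDerivAt_le_mul hb0 (hasDerivAt_smoothMoment m n) fun t ht =>
    sum_log_mul_rpow_smoothLE_le m n ht hb).trans ?_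
  gcongr
  exact smoothMoment_zero_le m n

theorem rpow_div_one_sub_rpow_le {x A b : ℝ} (hx : 2 ≤ x) (hb : b ≤ 1 / 2)
    (hxA : x ^ b ≤ Real.exp A) : x ^ (b - 1) / (1 - x ^ (b - 1)) ≤ 4 * (Real.exp A / x) := by
  have hx0 : 0 < x := by linarith
  have hle : x ^ (b - 1) ≤ 3 / 4 := by
    calc x ^ (b - 1) ≤ x ^ (-(1 / 2) : ℝ) :=
          Real.rpow_le_rpow_of_exponent_le (by linarith) (by linarith)
      _ ≤ 2 ^ (-(1 / 2) : ℝ) := Real.rpow_le_rpow_of_nonpos (by norm_num) hx (by norm_num)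
      _ = (√2)⁻¹ := by rw [Real.rpow_neg (by norm_num), Real.sqrt_eq_rpow]
      _ ≤ 3 / 4 := by
        rw [inv_le_comm₀ (by positivity) (by norm_num)]
        exact Real.le_sqrt_of_sq_le (by norm_num)
  have hdiv : x ^ (b - 1) ≤ Real.exp A / x := by
    rw [Real.rpow_sub_one hx0.ne']
    gcongr
  rw [div_le_iff₀ (by linarith)]
  nlinarith [div_pos (Real.exp_pos A) hx0]

theorem eulerLogDeriv_le {m : ℕ} (hm : m ≠ 0) {A b : ℝ} (hb0 : 0 ≤ b) (hb : b ≤ 1 / 2)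
    (hbm : b * Real.log m ≤ A) : eulerLogDeriv m b ≤ 96 * Real.exp A * (Real.log m + 2) := by
  have hlog4 : Real.log 4 ≤ 2 := by
    rw [show (4 : ℝ) = 2 ^ 2 by norm_num, Real.log_pow, Nat.cast_two]
    linarith [Real.log_two_lt_d9]
  calc eulerLogDeriv m b
      ≤ ∑ q ∈ gaussPrimesLE m, 4 * Real.exp A * (Real.log (gaussNorm q) / gaussNorm q) := by
        refine sum_le_sum fun q hq => ?_
        obtain ⟨hqm, hq⟩ := mem_gaussPrimesLE.1 hq
        have hq2 : (2 : ℝ) ≤ gaussNorm q := by exact_mod_cast two_le_gaussNorm_of_prime hq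
        have hqb : (gaussNorm q : ℝ) ^ b ≤ Real.exp A := by
          rw [Real.rpow_def_of_pos (by linarith), Real.exp_le_exp, mul_comm]
          refine le_trans ?_ hbm
          gcongr
        refine (mul_le_mul_of_nonneg_left (rpow_div_one_sub_rpow_le hq2 hb hqb)
          (Real.log_natCast_nonneg _)).trans_eq ?_
        ring
    _ ≤ 4 * Real.exp A * (24 * (Real.log m + 2)) := by
        rw [← mul_sum]
        gcongr
        exact (sum_log_gaussNorm_div_le m hm).trans (by gcongr)
    _ = _ := by ring

theorem smoothMoment_le_of_mul_log_le {m : ℕ} (hm : m ≠ 0) (n : ℕ) {A b : ℝ} (hb0 : 0 ≤ b)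
    (hb : b ≤ 1 / 2) (hbm : b * Real.log m ≤ A) :
    smoothMoment m n b ≤ Real.exp (96 * Real.exp A * (A + 1)) * (8 * (1 + Real.log n)) := by
  refine (smoothMoment_le m n hb0 (by linarith)).trans ?_
  refine mul_le_mul_of_nonneg_right (Real.exp_le_exp.2 ?_) (by positivity)
  calc eulerLogDeriv m b * b ≤ 96 * Real.exp A * (Real.log m + 2) * b := by
        gcongr
        exact eulerLogDeriv_le hm hb0 hb hbm
    _ = 96 * Real.exp A * (b * Real.log m + 2 * b) := by ring
    _ ≤ _ := by gcongr; linarith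

/-! ### Selberg's sieve -/

section SelbergSieve

open scoped ArithmeticFunction.Moebius

/-- The denominator `∑ μ(k)²/k` (over `k ≤ R`) of the main term in Selberg's upper bound sieve. -/
def selbergMass (R : ℕ) : ℝ := ∑ k ∈ Icc 1 R, (μ k : ℝ) ^ 2 / k

/-- The coefficients that diagonalize the quadratic form of `selbergWeight`. -/
def selbergDual (R k : ℕ) : ℝ := μ k / (k * selbergMass R)

/-- Selberg's weight `λ_d`, obtained from `selbergDual` by dual Möbius inversion over the
multiples of `d` up to the level `R`. -/
def selbergWeight (R d : ℕ) : ℝ :=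
  d * ∑ k ∈ Icc 1 R, if d ∣ k then (μ (k / d) : ℝ) * selbergDual R k else 0

variable {R : ℕ}

theorem one_le_selbergMass (hR : 1 ≤ R) : 1 ≤ selbergMass R := by
  have h := single_le_sum (f := fun k : ℕ => (μ k : ℝ) ^ 2 / k) (fun k _ => by positivity)
    (mem_Icc.2 ⟨le_rfl, hR⟩)
  simpa [selbergMass] using h

theorem sum_inv_sq_le_two (n : ℕ) : ∑ m ∈ Icc 1 n, ((m : ℝ) ^ 2)⁻¹ ≤ 2 := by
  rcases Nat.eq_zero_or_pos n with rfl | hn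
  · norm_num
  rw [← add_sum_Ioc_eq_sum_Icc hn]
  have h := sum_Ioc_inv_sq_le_sub (α := ℝ) one_ne_zero hn
  have hinv : (0 : ℝ) ≤ (n : ℝ)⁻¹ := by positivity
  norm_num at h ⊢
  linarith

theorem sum_inv_le_selbergMass_mul (R : ℕ) :
    ∑ n ∈ Icc 1 R, (n : ℝ)⁻¹ ≤ selbergMass R * ∑ m ∈ Icc 1 R, ((m : ℝ) ^ 2)⁻¹ := by
  have hex : ∀ n : ℕ, 0 < n → ∃ p : ℕ × ℕ, p.2 ^ 2 * p.1 = n ∧ Squarefree p.1 := by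
    intro n hn
    obtain ⟨a, b, _, _, h, h'⟩ := Nat.sq_mul_squarefree_of_pos hn
    exact ⟨(a, b), h, h'⟩
  choose! F hF hsqf using hex
  have hmaps : ∀ n ∈ Icc 1 R, F n ∈ Icc 1 R ×ˢ Icc 1 R := by
    intro n hn
    obtain ⟨hn1, hnR⟩ := mem_Icc.1 hn
    have hprod := hF n hn1
    have h1 : 1 ≤ (F n).1 := Nat.one_le_iff_ne_zero.2 (hsqf n hn1).ne_zero
    have h2 : 1 ≤ (F n).2 := Nat.one_le_iff_ne_zero.2 fun h => by simp [h] at hprod; omega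
    have hd1 : (F n).1 ≤ n := Nat.le_of_dvd hn1 ⟨_, by rw [mul_comm, hprod]⟩
    have hd2 : (F n).2 ≤ n := Nat.le_of_dvd hn1 ⟨(F n).2 * (F n).1, by
      rw [← mul_assoc, ← sq, hprod]⟩
    simp only [mem_product, mem_Icc]
    omega
  have hinj : Set.InjOn F (Icc 1 R : Finset ℕ) := fun a ha b hb h => by
    rw [← hF a (mem_Icc.1 ha).1, ← hF b (mem_Icc.1 hb).1, h]
  rw [selbergMass, sum_mul_sum, ← sum_product']
  calc _ = ∑ n ∈ Icc 1 R, ((μ (F n).1 : ℝ) ^ 2 / (F n).1 * (((F n).2 : ℝ) ^ 2)⁻¹) := by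
        refine sum_congr rfl fun n hn => ?_
        obtain ⟨hn1, -⟩ := mem_Icc.1 hn
        have hμ : (μ (F n).1 : ℝ) ^ 2 = 1 := by
          exact_mod_cast ArithmeticFunction.moebius_sq_eq_one_of_squarefree (hsqf n hn1)
        rw [hμ, one_div, ← mul_inv, mul_comm]
        exact_mod_cast congrArg (fun k : ℕ => (k : ℝ)⁻¹) (hF n hn1).symm
    _ = ∑ p ∈ (Icc 1 R).image F, ((μ p.1 : ℝ) ^ 2 / p.1 * ((p.2 : ℝ) ^ 2)⁻¹) := by
        rw [sum_image hinj]
    _ ≤ _ := sum_le_sum_of_subset_of_nonneg (image_subset_iff.2 hmaps) fun p _ _ => by positivity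

theorem log_le_two_mul_selbergMass (hR : 1 ≤ R) : Real.log (R + 1) ≤ 2 * selbergMass R := by
  calc Real.log (R + 1) ≤ ∑ n ∈ Icc 1 R, (n : ℝ)⁻¹ := by
        have h := log_add_one_le_harmonic R
        rw [harmonic_eq_sum_Icc] at h
        push_cast at h
        exact h
    _ ≤ selbergMass R * ∑ m ∈ Icc 1 R, ((m : ℝ) ^ 2)⁻¹ := sum_inv_le_selbergMass_mul R
    _ ≤ selbergMass R * 2 := by
        have := one_le_selbergMass hR
        gcongr
        exact sum_inv_sq_le_two R
    _ = 2 * selbergMass R := mul_comm _ _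

theorem selbergWeight_one (hR : 1 ≤ R) : selbergWeight R 1 = 1 := by
  have hmass := one_le_selbergMass hR
  calc selbergWeight R 1 = ∑ k ∈ Icc 1 R, (μ k : ℝ) ^ 2 / k / selbergMass R := by
        simp only [selbergWeight, selbergDual, Nat.cast_one, one_mul, one_dvd, if_true, Nat.div_one]
        exact sum_congr rfl fun k _ => by rw [sq, mul_div_assoc', div_div]
    _ = 1 := by rw [← sum_div, ← selbergMass, div_self (by linarith)]

theorem abs_selbergWeight_le {d : ℕ} (hR : 1 ≤ R) (hd : d ≤ R) :
    |selbergWeight R d| ≤ (R : ℝ) ^ 2 := by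
  have hmass := one_le_selbergMass hR
  have hμ : ∀ k : ℕ, |(μ k : ℝ)| ≤ 1 := fun k => by
    exact_mod_cast ArithmeticFunction.abs_moebius_le_one
  have hdual : ∀ k ∈ Icc 1 R, |selbergDual R k| ≤ 1 := by
    intro k hk
    have hk1 : (1 : ℝ) ≤ k := by exact_mod_cast (mem_Icc.1 hk).1
    have hden : 1 ≤ k * selbergMass R := one_le_mul_of_one_le_of_one_le hk1 hmass
    rw [selbergDual, abs_div, abs_of_pos (a := (k : ℝ) * selbergMass R) (by linarith),
      div_le_one (by linarith)]
    exact (hμ k).trans hden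
  have hterm : ∀ k ∈ Icc 1 R,
      |if d ∣ k then (μ (k / d) : ℝ) * selbergDual R k else 0| ≤ 1 := by
    intro k hk
    split_ifs
    · rw [abs_mul]
      exact mul_le_one₀ (hμ _) (abs_nonneg _) (hdual k hk)
    · simp
  rw [selbergWeight, abs_mul, Nat.abs_cast, sq]
  gcongr
  refine (abs_sum_le_sum_abs _ _).trans ((sum_le_sum hterm).trans_eq ?_)
  simp

theorem sum_divisors_moebius_div_eq {m k : ℕ} (hk : k ≠ 0) :
    (∑ d ∈ k.divisors with m ∣ d, (μ (k / d) : ℝ)) = if k = m then 1 else 0 := by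
  have hflip : (∑ d ∈ k.divisors with m ∣ d, (μ (k / d) : ℝ)) =
      ∑ e ∈ k.divisors with m ∣ k / e, (μ e : ℝ) := by
    rw [sum_filter, sum_filter, ← Nat.sum_div_divisors]
    refine sum_congr rfl fun e he => ?_
    rw [Nat.div_div_self (Nat.dvd_of_mem_divisors he) hk]
  rw [hflip]
  by_cases hmk : m ∣ k
  · obtain ⟨c, rfl⟩ := hmk
    have hm : m ≠ 0 := left_ne_zero_of_mul hk
    have hc : c ≠ 0 := right_ne_zero_of_mul hk
    have hdiv : {e ∈ (m * c).divisors | m ∣ m * c / e} = c.divisors := by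
      ext e
      simp only [mem_filter, Nat.mem_divisors, hk, hc, ne_eq, not_false_eq_true, and_true]
      refine ⟨fun ⟨he, hme⟩ => ?_, fun he => ⟨he.mul_left m, ?_⟩⟩
      · rw [Nat.dvd_div_iff_mul_dvd he, mul_comm] at hme
        exact (Nat.mul_dvd_mul_iff_left (Nat.pos_of_ne_zero hm)).1 hme
      · rw [Nat.mul_div_assoc m he]
        exact dvd_mul_right _ _
    have hsum : ∑ e ∈ c.divisors, (μ e : ℝ) = if c = 1 then 1 else 0 := by
      have h := congrArg (· c) ArithmeticFunction.moebius_mul_coe_zeta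
      simp only [ArithmeticFunction.coe_mul_zeta_apply, ArithmeticFunction.one_apply] at h
      exact_mod_cast h
    rw [hdiv, hsum]
    simp [hm]
  · rw [if_neg (by rintro rfl; exact hmk dvd_rfl)]
    refine sum_eq_zero fun e he => absurd ?_ hmk
    obtain ⟨he, hme⟩ := mem_filter.1 he
    exact hme.trans (Nat.div_dvd_of_dvd (Nat.dvd_of_mem_divisors he))

theorem sum_selbergWeight_div_eq {m : ℕ} (hm : m ∈ Icc 1 R) :
    (∑ d ∈ Icc 1 R, if m ∣ d then selbergWeight R d / d else 0) = selbergDual R m := by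
  have hcoeff : ∀ k ∈ Icc 1 R,
      (∑ d ∈ Icc 1 R, if m ∣ d then (if d ∣ k then (μ (k / d) : ℝ) else 0) else 0) =
        if k = m then 1 else 0 := by
    intro k hk
    obtain ⟨hk1, hkR⟩ := mem_Icc.1 hk
    rw [← sum_divisors_moebius_div_eq (by omega)]
    simp only [← ite_and]
    rw [← sum_filter]
    refine sum_congr ?_ fun _ _ => rfl
    ext d
    simp only [mem_filter, mem_Icc, Nat.mem_divisors]
    refine ⟨fun ⟨_, hmd, hdk⟩ => ⟨⟨hdk, by omega⟩, hmd⟩,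
      fun ⟨⟨hdk, _⟩, hmd⟩ => ⟨⟨?_, ?_⟩, hmd, hdk⟩⟩
    · exact Nat.pos_of_dvd_of_pos hdk hk1
    · exact (Nat.le_of_dvd hk1 hdk).trans hkR
  calc _ = ∑ d ∈ Icc 1 R, ∑ k ∈ Icc 1 R,
        (if m ∣ d then (if d ∣ k then (μ (k / d) : ℝ) else 0) else 0) * selbergDual R k := by
        refine sum_congr rfl fun d hd => ?_
        have hd0 : (d : ℝ) ≠ 0 := by exact_mod_cast (Nat.one_le_iff_ne_zero.1 (mem_Icc.1 hd).1)
        rw [selbergWeight, mul_div_cancel_left₀ _ hd0]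
        split_ifs <;> simp only [ite_mul, zero_mul, sum_const_zero]
    _ = ∑ k ∈ Icc 1 R, (if k = m then 1 else 0) * selbergDual R k := by
        rw [sum_comm]
        exact sum_congr rfl fun k hk => by rw [← sum_mul, hcoeff k hk]
    _ = selbergDual R m := by simp only [ite_mul, one_mul, zero_mul, sum_ite_eq', if_pos hm]

theorem natCast_gcd_eq_sum_totient {d : ℕ} (hd : d ∈ Icc 1 R) (e : ℕ) :
    (d.gcd e : ℝ) = ∑ m ∈ Icc 1 R, if m ∣ d ∧ m ∣ e then (m.totient : ℝ) else 0 := by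
  obtain ⟨hd1, hdR⟩ := mem_Icc.1 hd
  have hdiv : {m ∈ Icc 1 R | m ∣ d ∧ m ∣ e} = (d.gcd e).divisors := by
    ext m
    simp only [mem_filter, mem_Icc, Nat.mem_divisors, Nat.dvd_gcd_iff]
    refine ⟨fun h => ⟨h.2, Nat.gcd_ne_zero_left (by omega)⟩, fun ⟨h, _⟩ => ⟨⟨?_, ?_⟩, h⟩⟩
    · exact Nat.pos_of_dvd_of_pos h.1 hd1
    · exact (Nat.le_of_dvd hd1 h.1).trans hdR
  rw [← sum_filter, hdiv]
  exact_mod_cast (Nat.sum_totient (d.gcd e)).symm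

theorem inv_lcm_eq_sum_totient {d : ℕ} (hd : d ∈ Icc 1 R) (e : ℕ) :
    ((d.lcm e : ℕ) : ℝ)⁻¹ =
      ∑ m ∈ Icc 1 R, (m.totient : ℝ) *
        ((if m ∣ d then (d : ℝ)⁻¹ else 0) * (if m ∣ e then (e : ℝ)⁻¹ else 0)) := by
  have hd0 : d ≠ 0 := Nat.one_le_iff_ne_zero.1 (mem_Icc.1 hd).1
  have hgcd : (d.gcd e : ℝ) ≠ 0 := by exact_mod_cast Nat.gcd_ne_zero_left hd0
  have hprod : (d.gcd e : ℝ) * d.lcm e = d * e := by exact_mod_cast Nat.gcd_mul_lcm d e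
  calc ((d.lcm e : ℕ) : ℝ)⁻¹ = d.gcd e * ((d : ℝ)⁻¹ * (e : ℝ)⁻¹) := by
        rw [← mul_inv, ← hprod, mul_inv, mul_inv_cancel_left₀ hgcd]
    _ = _ := by
        rw [natCast_gcd_eq_sum_totient hd, sum_mul]
        refine sum_congr rfl fun m _ => ?_
        by_cases hmd : m ∣ d <;> by_cases hme : m ∣ e <;> simp [hmd, hme]

theorem sum_totient_mul_selbergDual_sq_le (hR : 1 ≤ R) :
    ∑ m ∈ Icc 1 R, (m.totient : ℝ) * selbergDual R m ^ 2 ≤ (selbergMass R)⁻¹ := by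
  have hmass := one_le_selbergMass hR
  calc _ ≤ ∑ m ∈ Icc 1 R, ((μ m : ℝ) ^ 2 / m) * ((selbergMass R) ^ 2)⁻¹ := by
        refine sum_le_sum fun m hm => ?_
        have hm0 : (0 : ℝ) < m := by exact_mod_cast (mem_Icc.1 hm).1
        calc _ ≤ (m : ℝ) * (μ m / (m * selbergMass R)) ^ 2 := by
              rw [selbergDual]
              gcongr
              exact Nat.totient_le m
          _ = _ := by field_simp
    _ = (selbergMass R)⁻¹ := by
        rw [← sum_mul, ← selbergMass]
        field_simp

theorem sum_selbergWeight_mul_div_lcm_le (hR : 1 ≤ R) :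
    ∑ d ∈ Icc 1 R, ∑ e ∈ Icc 1 R, selbergWeight R d * selbergWeight R e / (d.lcm e : ℕ) ≤
      (selbergMass R)⁻¹ := by
  calc _ = ∑ d ∈ Icc 1 R, ∑ e ∈ Icc 1 R, ∑ m ∈ Icc 1 R, (m.totient : ℝ) *
        ((if m ∣ d then selbergWeight R d / d else 0) *
          (if m ∣ e then selbergWeight R e / e else 0)) := by
        refine sum_congr rfl fun d hd => sum_congr rfl fun e _ => ?_
        rw [div_eq_mul_inv, inv_lcm_eq_sum_totient hd, mul_sum]
        refine sum_congr rfl fun m _ => ?_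
        split_ifs <;> ring
    _ = ∑ m ∈ Icc 1 R, (m.totient : ℝ) * selbergDual R m ^ 2 := by
        rw [sum_congr rfl fun d _ => sum_comm, sum_comm]
        refine sum_congr rfl fun m hm => ?_
        rw [← sum_selbergWeight_div_eq hm, sq, sum_mul_sum]
        simp only [mul_sum]
    _ ≤ (selbergMass R)⁻¹ := sum_totient_mul_selbergDual_sq_le hR

theorem abs_card_Ioc_filter_dvd_sub_le {U V : ℕ} (hUV : U ≤ V) (e : ℕ) :
    |(#{b ∈ Ioc U V | e ∣ b} : ℝ) - ((V : ℝ) - U) / e| ≤ 1 := by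
  have hsplit : U / e + #{b ∈ Ioc U V | e ∣ b} = V / e := by
    rw [← Nat.Ioc_filter_dvd_card_eq_div U e, ← Nat.Ioc_filter_dvd_card_eq_div V e,
      ← card_union_of_disjoint, ← filter_union, Ioc_union_Ioc_eq_Ioc U.zero_le hUV]
    exact disjoint_filter_filter (Ioc_disjoint_Ioc_of_le le_rfl)
  have hcard : ((U / e : ℕ) : ℝ) + #{b ∈ Ioc U V | e ∣ b} = (V / e : ℕ) := by
    exact_mod_cast hsplit
  have hU := Nat.floor_le (show (0 : ℝ) ≤ (U : ℝ) / e by positivity)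
  have hU' := Nat.lt_floor_add_one ((U : ℝ) / e)
  have hV := Nat.floor_le (show (0 : ℝ) ≤ (V : ℝ) / e by positivity)
  have hV' := Nat.lt_floor_add_one ((V : ℝ) / e)
  rw [Nat.floor_div_eq_div] at hU hU' hV hV'
  rw [sub_div, abs_le]
  constructor <;> linarith

theorem sum_sq_sum_selbergWeight_eq (s : Finset ℕ) :
    ∑ b ∈ s, (∑ d ∈ Icc 1 R, if d ∣ b then selbergWeight R d else 0) ^ 2 =
      ∑ d ∈ Icc 1 R, ∑ e ∈ Icc 1 R,
        selbergWeight R d * selbergWeight R e * (#{b ∈ s | d.lcm e ∣ b} : ℝ) := by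
  simp only [sq, sum_mul_sum]
  rw [sum_comm]
  refine sum_congr rfl fun d _ => ?_
  rw [sum_comm]
  refine sum_congr rfl fun e _ => ?_
  rw [card_filter, Nat.cast_sum, mul_sum]
  refine sum_congr rfl fun b _ => ?_
  by_cases hd : d ∣ b <;> by_cases he : e ∣ b <;> simp [Nat.lcm_dvd_iff, hd, he]

theorem sum_sq_sum_selbergWeight_le {U V : ℕ} (hUV : U ≤ V) (hR : 1 ≤ R) :
    ∑ b ∈ Ioc U V, (∑ d ∈ Icc 1 R, if d ∣ b then selbergWeight R d else 0) ^ 2 ≤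
      ((V : ℝ) - U) * (selbergMass R)⁻¹ + (R : ℝ) ^ 6 := by
  have hlen : (0 : ℝ) ≤ (V : ℝ) - U := sub_nonneg.2 (by exact_mod_cast hUV)
  calc _ = ∑ d ∈ Icc 1 R, ∑ e ∈ Icc 1 R, selbergWeight R d * selbergWeight R e *
        (#{b ∈ Ioc U V | d.lcm e ∣ b} : ℝ) := sum_sq_sum_selbergWeight_eq _
    _ ≤ ∑ d ∈ Icc 1 R, ∑ e ∈ Icc 1 R,
        (((V : ℝ) - U) * (selbergWeight R d * selbergWeight R e / (d.lcm e : ℕ)) +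
          (R : ℝ) ^ 2 * (R : ℝ) ^ 2 * 1) := by
        refine sum_le_sum fun d hd => sum_le_sum fun e he => ?_
        have herror : selbergWeight R d * selbergWeight R e *
            (#{b ∈ Ioc U V | d.lcm e ∣ b} - ((V : ℝ) - U) / (d.lcm e : ℕ)) ≤
              (R : ℝ) ^ 2 * (R : ℝ) ^ 2 * 1 := by
          refine (le_abs_self _).trans ?_
          rw [abs_mul, abs_mul]
          gcongr
          · exact abs_selbergWeight_le hR (mem_Icc.1 hd).2
          · exact abs_selbergWeight_le hR (mem_Icc.1 he).2
          · exact abs_card_Ioc_filter_dvd_sub_le hUV _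
        linear_combination herror
    _ = ((V : ℝ) - U) * (∑ d ∈ Icc 1 R, ∑ e ∈ Icc 1 R,
          selbergWeight R d * selbergWeight R e / (d.lcm e : ℕ)) + (R : ℝ) ^ 6 := by
        simp only [sum_add_distrib, mul_sum, sum_const, Nat.card_Icc, nsmul_eq_mul,
          Nat.add_sub_cancel]
        ring
    _ ≤ _ := by
        gcongr
        exact sum_selbergWeight_mul_div_lcm_le hR

theorem card_le_of_lt_prime_factors {U V : ℕ} {z : ℝ} (hUV : U ≤ V) (hz : 1 < z) {S : Finset ℕ}
    (hS : S ⊆ Ioc U V) (hrough : ∀ b ∈ S, ∀ p : ℕ, p.Prime → p ∣ b → z < p) :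
    (#S : ℝ) ≤ ((V : ℝ) - U) * (2 / Real.log z) + z ^ 6 := by
  set R := ⌊z⌋₊
  have hR : 1 ≤ R := (Nat.one_le_floor_iff z).2 hz.le
  have hRz : (R : ℝ) ≤ z := Nat.floor_le (by linarith)
  have hweight : ∀ b ∈ S, (∑ d ∈ Icc 1 R, if d ∣ b then selbergWeight R d else 0) = 1 := by
    intro b hb
    rw [sum_eq_single_of_mem 1 (mem_Icc.2 ⟨le_rfl, hR⟩), if_pos (one_dvd b), selbergWeight_one hR]
    refine fun d hd hd1 => if_neg fun hdb => ?_
    have hlt := hrough b hb d.minFac (Nat.minFac_prime hd1) ((Nat.minFac_dvd d).trans hdb)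
    have hle : (d.minFac : ℝ) ≤ R := by
      exact_mod_cast (Nat.minFac_le (mem_Icc.1 hd).1).trans (mem_Icc.1 hd).2
    linarith
  have hmass : (selbergMass R)⁻¹ ≤ 2 / Real.log z := by
    have hlog := log_le_two_mul_selbergMass hR
    have hlogz : Real.log z ≤ Real.log (R + 1) :=
      Real.log_le_log (by linarith) (Nat.lt_floor_add_one z).le
    rw [inv_eq_one_div, div_le_div_iff₀ (by linarith [one_le_selbergMass hR]) (Real.log_pos hz)]
    linarith
  have hlen : (0 : ℝ) ≤ (V : ℝ) - U := sub_nonneg.2 (by exact_mod_cast hUV)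
  calc (#S : ℝ) = ∑ b ∈ S, (∑ d ∈ Icc 1 R, if d ∣ b then selbergWeight R d else 0) ^ 2 := by
        rw [sum_congr rfl fun b hb => by rw [hweight b hb, one_pow], sum_const, nsmul_one]
    _ ≤ ∑ b ∈ Ioc U V, (∑ d ∈ Icc 1 R, if d ∣ b then selbergWeight R d else 0) ^ 2 :=
        sum_le_sum_of_subset_of_nonneg hS fun _ _ _ => sq_nonneg _
    _ ≤ ((V : ℝ) - U) * (selbergMass R)⁻¹ + (R : ℝ) ^ 6 := sum_sq_sum_selbergWeight_le hUV hR
    _ ≤ _ := by gcongr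

end SelbergSieve

/-! ### Rough Gaussian integers -/

/-- Every prime divisor of `c` has norm greater than `z`. -/
def IsRough (z : ℝ) (c : GaussianInt) : Prop :=
  ∀ q : GaussianInt, Prime q → q ∣ c → z < gaussNorm q

theorem gaussNorm_le_of_dvd {a b : GaussianInt} (hb : b ≠ 0) (hab : a ∣ b) :
    gaussNorm a ≤ gaussNorm b :=
  Nat.le_of_dvd (gaussNorm_pos.2 hb) (map_dvd gaussNorm hab)

theorem IsSmooth.mul {m : ℕ} {a b : GaussianInt} (ha : IsSmooth m a) (hb : IsSmooth m b) :
    IsSmooth m (a * b) :=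
  ⟨mul_ne_zero ha.1 hb.1, fun q hq hqab => (hq.dvd_or_dvd hqab).elim (ha.2 q hq) (hb.2 q hq)⟩

theorem IsRough.mul {z : ℝ} {a b : GaussianInt} (ha : IsRough z a) (hb : IsRough z b) :
    IsRough z (a * b) :=
  fun q hq hqab => (hq.dvd_or_dvd hqab).elim (ha q hq) (hb q hq)

theorem exists_eq_isSmooth_mul_isRough (m : ℕ) {w : GaussianInt} (hw : w ≠ 0) :
    ∃ a c, w = a * c ∧ IsSmooth m a ∧ IsRough m c := by
  induction w using UniqueFactorizationMonoid.induction_on_prime with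
  | h₁ => exact absurd rfl hw
  | h₂ u hu =>
    exact ⟨u, 1, (mul_one u).symm, ⟨hw, fun q hq hqu => absurd (isUnit_of_dvd_unit hqu hu)
      hq.not_isUnit⟩, fun q hq hq1 => absurd (isUnit_of_dvd_one hq1) hq.not_isUnit⟩
  | h₃ w p hw0 hp ih =>
    obtain ⟨a, c, rfl, ha, hc⟩ := ih hw0
    rcases le_or_gt (gaussNorm p) m with hpm | hpm
    · refine ⟨p * a, c, (mul_assoc p a c).symm, IsSmooth.mul ⟨hp.ne_zero, fun q _ hqp => ?_⟩ ha, hc⟩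
      exact (gaussNorm_le_of_dvd hp.ne_zero hqp).trans hpm
    · refine ⟨a, p * c, mul_left_comm p a c, ha, IsRough.mul (fun q hq hqp => ?_) hc⟩
      have hpq := gaussNorm_le_of_dvd hq.ne_zero (hq.associated_of_dvd hp hqp).symm.dvd
      exact_mod_cast hpm.trans_le hpq

theorem IsRough.lt_of_prime_dvd_gaussNorm {z : ℝ} {c : GaussianInt}
    (hc : IsRough (z ^ 2) c) {p : ℕ} (hp : p.Prime) (hpc : p ∣ gaussNorm c) : z < p := by
  obtain ⟨q, hq, hqp⟩ := exists_prime_dvd_natCast hp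
  have hqle : (gaussNorm q : ℝ) ≤ (p : ℝ) ^ 2 := by
    rw [← Nat.cast_pow, ← gaussNorm_natCast]
    exact_mod_cast gaussNorm_le_of_dvd (by exact_mod_cast hp.ne_zero) hqp
  have hlt : z ^ 2 < gaussNorm q := by
    rcases dvd_or_star_dvd_of_dvd_gaussNorm hq hqp hpc with h | h
    · exact hc q hq h
    · rw [← gaussNorm_star q]
      exact hc (star q)
        ((MulEquiv.prime_iff (starRingAut : GaussianInt ≃+* GaussianInt)).2 hq) h
  exact lt_of_pow_lt_pow_left₀ 2 (Nat.cast_nonneg p) (hlt.trans_le hqle)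

theorem cardFactors_mul_log_le {n : ℕ} {z : ℝ} (hz : 0 < z) (hn : n ≠ 0)
    (hrough : ∀ p : ℕ, p.Prime → p ∣ n → z < p) :
    ArithmeticFunction.cardFactors n * Real.log z ≤ Real.log n := by
  rw [← Real.log_pow]
  refine Real.log_le_log (by positivity) ?_
  induction n using induction_on_primes with
  | zero => exact absurd rfl hn
  | one => simp
  | prime_mul p n hp ih =>
    have hn0 := right_ne_zero_of_mul hn
    rw [ArithmeticFunction.cardFactors_mul hp.ne_zero hn0,
      ArithmeticFunction.cardFactors_apply_prime hp, pow_add, pow_one, Nat.cast_mul]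
    gcongr
    · exact (hrough p hp (dvd_mul_right p n)).le
    · exact ih hn0 fun q hq hqn => hrough q hq (hqn.mul_left p)

theorem card_normEq_le_exp {n : ℕ} {z : ℝ} (hz : 1 < z) (hn : n ≠ 0)
    (hrough : ∀ p : ℕ, p.Prime → p ∣ n → z < p) :
    (#(normEq n) : ℝ) ≤ 4 * Real.exp (Real.log n / Real.log z) := by
  have h2 : (2 : ℝ) ≤ Real.exp 1 := by linarith [Real.add_one_le_exp 1]
  calc (#(normEq n) : ℝ) ≤ 4 * 2 ^ ArithmeticFunction.cardFactors n := by
        exact_mod_cast card_normEq_le n hn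
    _ ≤ 4 * Real.exp 1 ^ ArithmeticFunction.cardFactors n := by gcongr
    _ = 4 * Real.exp (ArithmeticFunction.cardFactors n) := by rw [← Real.exp_nat_mul, mul_one]
    _ ≤ _ := by
        gcongr
        rw [le_div_iff₀ (Real.log_pos hz)]
        exact cardFactors_mul_log_le (by linarith) hn hrough

section RoughInShortInterval

variable {X Y n : ℕ} {z : ℝ} {S : Finset GaussianInt}

theorem image_gaussNorm_subset_Ioc (hn : n ≠ 0)
    (hS : ∀ c ∈ S, n * gaussNorm c ∈ Ioc X (X + Y)) :
    S.image gaussNorm ⊆ Ioc (X / n) ((X + Y) / n) := by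
  refine image_subset_iff.2 fun c hc => ?_
  obtain ⟨hlow, hupp⟩ := mem_Ioc.1 (hS c hc)
  have hn0 := Nat.pos_of_ne_zero hn
  rw [mul_comm] at hlow hupp
  exact mem_Ioc.2 ⟨(Nat.div_lt_iff_lt_mul hn0).2 hlow, (Nat.le_div_iff_mul_le hn0).2 hupp⟩

theorem natCast_add_div_sub_le (X Y n : ℕ) :
    (((X + Y) / n : ℕ) : ℝ) - (X / n : ℕ) ≤ (Y : ℝ) / n + 1 := by
  have hupp := Nat.floor_le (show (0 : ℝ) ≤ ((X + Y : ℕ) : ℝ) / n by positivity)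
  have hlow := Nat.lt_floor_add_one ((X : ℝ) / n)
  rw [Nat.floor_div_eq_div] at hlow hupp
  rw [Nat.cast_add, add_div] at hupp
  linarith

theorem card_le_card_image_gaussNorm_mul (hz : 1 < z) (hn : n ≠ 0)
    (hS : ∀ c ∈ S, n * gaussNorm c ∈ Ioc X (X + Y)) (hrough : ∀ c ∈ S, IsRough (z ^ 2) c) :
    (#S : ℝ) ≤ 4 * Real.exp (Real.log (X + Y : ℕ) / Real.log z) * #(S.image gaussNorm) := by
  have hlogz := Real.log_pos hz
  have hfiber : ∀ k ∈ S.image gaussNorm, (#{c ∈ S | gaussNorm c = k} : ℝ) ≤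
      4 * Real.exp (Real.log (X + Y : ℕ) / Real.log z) := by
    intro k hk
    obtain ⟨hk0, hkM⟩ := mem_Ioc.1 (image_gaussNorm_subset_Ioc hn hS hk)
    obtain ⟨c, hc, rfl⟩ := mem_image.1 hk
    have hN0 : 0 < gaussNorm c := (Nat.zero_le _).trans_lt hk0
    have hNM : gaussNorm c ≤ X + Y := hkM.trans (Nat.div_le_self _ _)
    calc (#{c' ∈ S | gaussNorm c' = gaussNorm c} : ℝ) ≤ #(normEq (gaussNorm c)) := by
          exact_mod_cast card_le_card fun c' hc' => mem_normEq.2 (mem_filter.1 hc').2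
      _ ≤ 4 * Real.exp (Real.log (gaussNorm c) / Real.log z) :=
          card_normEq_le_exp hz hN0.ne' fun p hp hpc =>
            (hrough c hc).lt_of_prime_dvd_gaussNorm hp hpc
      _ ≤ _ := by gcongr
  rw [card_eq_sum_card_image gaussNorm S, Nat.cast_sum]
  refine (sum_le_sum hfiber).trans_eq ?_
  rw [sum_const, nsmul_eq_mul, mul_comm]

theorem card_isRough_le (hz : 1 < z) (hn : n ≠ 0)
    (hS : ∀ c ∈ S, n * gaussNorm c ∈ Ioc X (X + Y)) (hrough : ∀ c ∈ S, IsRough (z ^ 2) c) :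
    (#S : ℝ) ≤ 4 * Real.exp (Real.log (X + Y : ℕ) / Real.log z) * ((Y : ℝ) / n + 1) := by
  refine (card_le_card_image_gaussNorm_mul hz hn hS hrough).trans ?_
  gcongr
  have hle : X / n ≤ (X + Y) / n := Nat.div_le_div_right (by omega)
  have hcard := card_le_card (image_gaussNorm_subset_Ioc hn hS)
  rw [Nat.card_Ioc] at hcard
  calc (#(S.image gaussNorm) : ℝ) ≤ ((X + Y) / n - X / n : ℕ) := by exact_mod_cast hcard
    _ ≤ _ := by
        rw [Nat.cast_sub hle]
        exact natCast_add_div_sub_le X Y n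

theorem card_isRough_le_sieve (hz : 1 < z) (hn : n ≠ 0) (hY : z ^ 7 * n ≤ Y)
    (hS : ∀ c ∈ S, n * gaussNorm c ∈ Ioc X (X + Y)) (hrough : ∀ c ∈ S, IsRough (z ^ 2) c) :
    (#S : ℝ) ≤
      4 * Real.exp (Real.log (X + Y : ℕ) / Real.log z) * (5 / Real.log z * (Y * (n : ℝ)⁻¹)) := by
  refine (card_le_card_image_gaussNorm_mul hz hn hS hrough).trans ?_
  gcongr
  have hlogz := Real.log_pos hz
  have hn0 : (0 : ℝ) < n := by exact_mod_cast Nat.pos_of_ne_zero hn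
  have hYn : z ^ 7 ≤ (Y : ℝ) / n := (le_div_iff₀ hn0).2 hY
  have hYn1 : 1 ≤ (Y : ℝ) / n := (one_le_pow₀ hz.le).trans hYn
  have herror : z ^ 6 ≤ (Y : ℝ) / n / Real.log z := by
    rw [le_div_iff₀ hlogz]
    calc z ^ 6 * Real.log z ≤ z ^ 6 * z := by
          gcongr
          exact Real.log_le_self (by linarith)
      _ = z ^ 7 := by ring
      _ ≤ (Y : ℝ) / n := hYn
  have hprime : ∀ k ∈ S.image gaussNorm, ∀ p : ℕ, p.Prime → p ∣ k → z < p := by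
    intro k hk p hp hpk
    obtain ⟨c, hc, rfl⟩ := mem_image.1 hk
    exact (hrough c hc).lt_of_prime_dvd_gaussNorm hp hpk
  calc (#(S.image gaussNorm) : ℝ)
      ≤ (((X + Y) / n : ℕ) - (X / n : ℕ)) * (2 / Real.log z) + z ^ 6 :=
        card_le_of_lt_prime_factors (Nat.div_le_div_right (by omega)) hz
          (image_gaussNorm_subset_Ioc hn hS) hprime
    _ ≤ (2 * ((Y : ℝ) / n)) * (2 / Real.log z) + (Y : ℝ) / n / Real.log z := by
        gcongr
        linarith [natCast_add_div_sub_le X Y n]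
    _ = _ := by
        field_simp
        ring

end RoughInShortInterval

/-! ### Counting products -/

theorem card_le_sum_of_eq_mul {α : Type*} [Mul α] {S T : Finset α} {P : α → Prop} {F : α → ℝ}
    (hS : ∀ w ∈ S, ∃ a ∈ T, ∃ c, w = a * c ∧ P c)
    (hF : ∀ a ∈ T, ∀ s : Finset α, (∀ c ∈ s, a * c ∈ S ∧ P c) → (#s : ℝ) ≤ F a) :
    (#S : ℝ) ≤ ∑ a ∈ T, F a := by
  classical
  choose! A hAT C hAC hPC using hS
  rw [card_eq_sum_card_fiberwise hAT, Nat.cast_sum]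
  refine sum_le_sum fun a ha => ?_
  have hinj : Set.InjOn C ({w ∈ S | A w = a} : Finset α) := by
    intro x hx y hy hxy
    obtain ⟨hxS, hxa⟩ := mem_filter.1 hx
    obtain ⟨hyS, hya⟩ := mem_filter.1 hy
    rw [hAC x hxS, hAC y hyS, hxa, hya, hxy]
  rw [← card_image_of_injOn hinj]
  refine hF a ha _ fun c hc => ?_
  obtain ⟨w, hw, rfl⟩ := mem_image.1 hc
  obtain ⟨hwS, hwa⟩ := mem_filter.1 hw
  exact ⟨by rwa [← hwa, ← hAC w hwS], hPC w hwS⟩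

theorem sum_inv_gaussNorm_le_smoothMoment {m n : ℕ} {b B : ℝ} (hB : 0 < B)
    {T : Finset GaussianInt} (hT : T ⊆ smoothLE m n)
    (hTB : ∀ a ∈ T, B ≤ (gaussNorm a : ℝ) ^ b) :
    ∑ a ∈ T, (gaussNorm a : ℝ)⁻¹ ≤ B⁻¹ * smoothMoment m n b := by
  rw [smoothMoment, mul_sum]
  refine (sum_le_sum fun a ha => ?_).trans
    (sum_le_sum_of_subset_of_nonneg hT fun a _ _ => by positivity)
  have hpos : (0 : ℝ) < gaussNorm a := by
    exact_mod_cast gaussNorm_pos.2 (mem_smoothLE.1 (hT ha)).2.1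
  rw [Real.rpow_sub_one hpos.ne', ← mul_div_assoc, inv_eq_one_div]
  gcongr
  rw [inv_mul_eq_div, one_le_div hB]
  exact hTB a ha

/-! ### Integers whose cofactor is moderately rough -/

/-- `w = a * c` with `a` of norm at most `D`, but not much smaller, where the primes dividing `a`
have norm at most `D ^ (1 / r)` and those dividing `c` have norm above `D ^ (1 / (r + 1))`. -/
def HasLevel (D r : ℕ) (w : GaussianInt) : Prop :=
  ∃ a ∈ smoothLE (Nat.nthRoot r D) D, D ^ r ≤ D * gaussNorm a ^ r ∧
    ∃ c, w = a * c ∧ IsRough ((D : ℝ) ^ ((r + 1 : ℕ) : ℝ)⁻¹) c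

section Level

variable {D r : ℕ}

theorem sum_inv_gaussNorm_level_le {A : ℝ} (hA : 0 ≤ A) (hr : r ≠ 0) (hD : 1 < D)
    (hAr : 2 * A * r ≤ Real.log D) :
    ∑ a ∈ smoothLE (Nat.nthRoot r D) D with D ^ r ≤ D * gaussNorm a ^ r, (gaussNorm a : ℝ)⁻¹ ≤
      Real.exp (-(A * (r - 1))) *
        (Real.exp (96 * Real.exp A * (A + 1)) * (8 * (1 + Real.log D))) := by
  have hlogD : 0 < Real.log D := Real.log_pos (by exact_mod_cast hD)
  have hroot : Nat.nthRoot r D ≠ 0 :=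
    Nat.one_le_iff_ne_zero.1 ((Nat.le_nthRoot_iff hr).2 (by rw [one_pow]; exact hD.le))
  have hrootlog : r * Real.log (Nat.nthRoot r D) ≤ Real.log D := by
    rw [← Real.log_pow]
    refine Real.log_le_log (by positivity) ?_
    exact_mod_cast Nat.pow_nthRoot_le (Or.inl hr)
  set b : ℝ := A * r / Real.log D with hb
  have hmoment := smoothMoment_le_of_mul_log_le (m := Nat.nthRoot r D) hroot D (A := A) (b := b)
    (by positivity) (by rw [hb, div_le_iff₀ hlogD]; linarith) <| by
      rw [hb, div_mul_eq_mul_div, div_le_iff₀ hlogD, mul_assoc]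
      gcongr
  rw [Real.exp_neg]
  refine (sum_inv_gaussNorm_le_smoothMoment (Real.exp_pos _) (filter_subset _ _)
    fun a ha => ?_).trans (mul_le_mul_of_nonneg_left hmoment (by positivity))
  obtain ⟨ha, hlarge⟩ := mem_filter.1 ha
  have hpos : (0 : ℝ) < gaussNorm a := by
    exact_mod_cast gaussNorm_pos.2 (mem_smoothLE.1 ha).2.1
  have hloglarge : r * Real.log D ≤ Real.log D + r * Real.log (gaussNorm a) := by
    rw [← Real.log_pow, ← Real.log_pow, ← Real.log_mul (by positivity) (by positivity)]
    exact Real.log_le_log (by positivity) (by exact_mod_cast hlarge)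
  rw [Real.rpow_def_of_pos hpos, Real.exp_le_exp, hb, mul_div_assoc', le_div_iff₀ hlogD]
  linear_combination A * hloglarge

theorem card_isRough_level_le {κ X Y n : ℕ} (hD : 1 < D) (hn : n ≠ 0) (hnD : n ≤ D)
    (hDY : D ^ 2 ≤ Y) (hM : X + Y ≤ D ^ κ) {S : Finset GaussianInt}
    (hS : ∀ c ∈ S, n * gaussNorm c ∈ Ioc X (X + Y) ∧ IsRough ((D : ℝ) ^ ((r + 1 : ℕ) : ℝ)⁻¹) c) :
    (#S : ℝ) ≤ 140 * (r + 1) * Real.exp (7 * κ * (r + 1)) / Real.log D * Y * (n : ℝ)⁻¹ := by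
  have hD1 : (1 : ℝ) < D := by exact_mod_cast hD
  have hlogD : 0 < Real.log D := Real.log_pos hD1
  set z : ℝ := Real.exp (Real.log D / (7 * (r + 1))) with hzdef
  have hlogz : Real.log z = Real.log D / (7 * (r + 1)) := Real.log_exp _
  have hz : 1 < z := Real.one_lt_exp_iff.2 (by positivity)
  have hz7 : z ^ 7 = (D : ℝ) ^ ((r + 1 : ℕ) : ℝ)⁻¹ := by
    rw [hzdef, ← Real.exp_nat_mul, Real.rpow_def_of_pos (by linarith)]
    congr 1
    push_cast
    field_simp
  have hY : z ^ 7 * n ≤ Y := by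
    calc z ^ 7 * n ≤ D * D := by
          gcongr
          rw [hz7]
          exact Real.rpow_le_self_of_one_le hD1.le (inv_le_one_of_one_le₀ (by simp))
      _ ≤ Y := by exact_mod_cast (sq D) ▸ hDY
  have hrough : ∀ c ∈ S, IsRough (z ^ 2) c := fun c hc q hq hqc =>
    (pow_le_pow_right₀ hz.le (by norm_num)).trans_lt (hz7 ▸ (hS c hc).2 q hq hqc)
  have hexp : Real.log (X + Y : ℕ) / Real.log z ≤ 7 * κ * (r + 1) := by
    have hlogM : Real.log (X + Y : ℕ) ≤ κ * Real.log D := by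
      rw [← Real.log_pow]
      have hM0 : 0 < X + Y := by have := pow_pos (by omega : 0 < D) 2; omega
      exact Real.log_le_log (by exact_mod_cast hM0) (by exact_mod_cast hM)
    rw [hlogz, div_div_eq_mul_div, div_le_iff₀ hlogD]
    nlinarith
  calc (#S : ℝ) ≤ 4 * Real.exp (Real.log (X + Y : ℕ) / Real.log z) *
        (5 / Real.log z * (Y * (n : ℝ)⁻¹)) :=
        card_isRough_le_sieve hz hn hY (fun c hc => (hS c hc).1) hrough
    _ ≤ 4 * Real.exp (7 * κ * (r + 1)) * (5 / Real.log z * (Y * (n : ℝ)⁻¹)) := by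
        have := Real.log_pos hz
        gcongr
    _ = _ := by
        rw [hlogz]
        field_simp
        ring

theorem card_hasLevel_le {κ X Y : ℕ} (hD : 1 < D) (hDY : D ^ 2 ≤ Y) (hM : X + Y ≤ D ^ κ)
    {S : Finset GaussianInt} (hS : ∀ w ∈ S, gaussNorm w ∈ Ioc X (X + Y) ∧ HasLevel D r w) :
    (#S : ℝ) ≤ 140 * (r + 1) * Real.exp (7 * κ * (r + 1)) / Real.log D * Y *
      ∑ a ∈ smoothLE (Nat.nthRoot r D) D with D ^ r ≤ D * gaussNorm a ^ r,
        (gaussNorm a : ℝ)⁻¹ := by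
  rw [mul_sum]
  refine card_le_sum_of_eq_mul (P := IsRough ((D : ℝ) ^ ((r + 1 : ℕ) : ℝ)⁻¹)) (fun w hw => ?_)
    fun a ha s hs => ?_
  · obtain ⟨-, a, ha, hlarge, hc⟩ := hS w hw
    exact ⟨a, mem_filter.2 ⟨ha, hlarge⟩, hc⟩
  · obtain ⟨haD, ha⟩ := mem_smoothLE.1 (mem_filter.1 ha).1
    refine card_isRough_level_le hD (gaussNorm_pos.2 ha.1).ne' haD hDY hM fun c hc => ?_
    exact ⟨map_mul gaussNorm a c ▸ (hS _ (hs c hc).1).1, (hs c hc).2⟩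

theorem exists_card_hasLevel_le (κ : ℕ) : ∃ C : ℝ, 0 < C ∧ ∀ {D r X Y : ℕ}, r ≠ 0 →
    2 * (7 * κ + 2) * r ≤ Real.log D → D ^ 2 ≤ Y → X + Y ≤ D ^ κ → ∀ S : Finset GaussianInt,
    (∀ w ∈ S, gaussNorm w ∈ Ioc X (X + Y) ∧ HasLevel D r w) →
      (#S : ℝ) ≤ C * Y * Real.exp (-r) := by
  set A : ℝ := 7 * κ + 2 with hA
  set K : ℝ := Real.exp (96 * Real.exp A * (A + 1))
  refine ⟨2240 * Real.exp (14 * κ + 2) * K, by positivity, fun {D r X Y} hr hlog hDY hM S hS => ?_⟩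
  have hr1 : (1 : ℝ) ≤ r := by exact_mod_cast Nat.one_le_iff_ne_zero.2 hr
  have hlogD : 1 ≤ Real.log D := by nlinarith
  have hD : 1 < D := by
    by_contra! hD
    linarith [Real.log_nonpos D.cast_nonneg (by exact_mod_cast hD)]
  calc (#S : ℝ) ≤ _ := card_hasLevel_le hD hDY hM hS
    _ ≤ 140 * (r + 1) * Real.exp (7 * κ * (r + 1)) / Real.log D * Y *
        (Real.exp (-(A * (r - 1))) * (K * (8 * (2 * Real.log D)))) := by
        gcongr
        refine (sum_inv_gaussNorm_level_le (by positivity) hr hD hlog).trans ?_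
        gcongr
        linarith
    _ = 2240 * K * Y * ((r + 1) * (Real.exp (7 * κ * (r + 1)) * Real.exp (-(A * (r - 1))))) := by
        field_simp
        ring
    _ ≤ 2240 * K * Y * (Real.exp r * (Real.exp (7 * κ * (r + 1)) * Real.exp (-(A * (r - 1))))) := by
        gcongr
        exact Real.add_one_le_exp _
    _ = 2240 * K * Y * (Real.exp (14 * κ + 2) * Real.exp (-r)) := by
        simp only [← Real.exp_add, hA]
        ring_nf
    _ = _ := by ring

end Level

/-! ### Integers with a large smooth divisor -/

/-- `w = a * c` with `a` smooth of norm at least `D / m` and `c` rough, both relative to `m`. -/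
def HasLargeSmoothPart (m D : ℕ) (w : GaussianInt) : Prop :=
  ∃ a, IsSmooth m a ∧ D ≤ gaussNorm a * m ∧ ∃ c, w = a * c ∧ IsRough m c

theorem sum_div_gaussNorm_add_one_le {m M : ℕ} {b Q Y : ℝ} (hb : b ≤ 1) (hQ : 0 < Q) (hY : 0 ≤ Y)
    (hMQ : (M : ℝ) ^ (1 - b) ≤ Q) {T : Finset GaussianInt} (hT : T ⊆ smoothLE m M)
    (hTQ : ∀ a ∈ T, Q ^ 3 ≤ gaussNorm a * m) :
    ∑ a ∈ T, (Y * (gaussNorm a : ℝ)⁻¹ + 1) ≤ (Y * (m / Q ^ 2) + Q) * smoothMoment m M b := by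
  rw [smoothMoment, mul_sum]
  refine (sum_le_sum fun a ha => ?_).trans
    (sum_le_sum_of_subset_of_nonneg hT fun a _ _ => by positivity)
  obtain ⟨haM, hsmooth⟩ := mem_smoothLE.1 (hT ha)
  have hpos : (0 : ℝ) < gaussNorm a := by exact_mod_cast gaussNorm_pos.2 hsmooth.1
  have hNQ : (gaussNorm a : ℝ) ^ (1 - b) ≤ Q := by
    refine (Real.rpow_le_rpow hpos.le (by exact_mod_cast haM) (by linarith)).trans hMQ
  have hsplit : (gaussNorm a : ℝ) ^ (1 - b) * (gaussNorm a : ℝ) ^ (b - 1) = 1 := by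
    rw [← Real.rpow_add hpos, sub_add_sub_cancel, sub_self, Real.rpow_zero]
  have hone : 1 ≤ Q * (gaussNorm a : ℝ) ^ (b - 1) :=
    hsplit.symm.le.trans (mul_le_mul_of_nonneg_right hNQ (by positivity))
  have hinv : (gaussNorm a : ℝ)⁻¹ ≤ m / Q ^ 2 * (gaussNorm a : ℝ) ^ (b - 1) := by
    calc (gaussNorm a : ℝ)⁻¹ ≤ m / Q ^ 3 := by
          rw [inv_eq_one_div, div_le_div_iff₀ hpos (by positivity), one_mul, mul_comm]
          exact hTQ a ha
      _ ≤ m / Q ^ 3 * (Q * (gaussNorm a : ℝ) ^ (b - 1)) :=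
          le_mul_of_one_le_right (by positivity) hone
      _ = _ := by field_simp
  rw [add_mul, mul_assoc]
  gcongr

theorem card_hasLargeSmoothPart_le {m D X Y : ℕ} {b Q : ℝ} (hm : 1 < m) (hb : b ≤ 1)
    (hbm : 2 ≤ (1 - b) * Real.log m) (hQ : 0 < Q) (hQD : Q ^ 3 = D)
    (hM : ((X + Y : ℕ) : ℝ) ^ (1 - b) ≤ Q) (hMpos : X + Y ≠ 0) (S : Finset GaussianInt)
    (hS : ∀ w ∈ S, gaussNorm w ∈ Ioc X (X + Y) ∧ HasLargeSmoothPart m D w) :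
    (#S : ℝ) ≤ 4 * Q * ((Y * (m / Q ^ 2) + Q) * smoothMoment m (X + Y) b) := by
  have hm0 : (0 : ℝ) < m := by exact_mod_cast (by omega : 0 < m)
  have hz : 1 < √(m : ℝ) := Real.lt_sqrt_of_sq_lt (by simpa using hm)
  have hexp : Real.exp (Real.log (X + Y : ℕ) / Real.log √(m : ℝ)) ≤ Q := by
    have hlogm : 0 < Real.log m := Real.log_pos (by exact_mod_cast hm)
    have hMlog : 0 ≤ Real.log (X + Y : ℕ) := Real.log_natCast_nonneg _
    refine le_trans (Real.exp_le_exp.2 ?_)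
      ((Real.rpow_def_of_pos (by exact_mod_cast Nat.pos_of_ne_zero hMpos) _).symm.le.trans hM)
    rw [Real.log_sqrt hm0.le, div_le_iff₀ (by positivity)]
    nlinarith
  have hcount : (#S : ℝ) ≤ ∑ a ∈ smoothLE m (X + Y) with D ≤ gaussNorm a * m,
      4 * Q * (Y * (gaussNorm a : ℝ)⁻¹ + 1) := by
    refine card_le_sum_of_eq_mul (P := IsRough m) (fun w hw => ?_) fun a ha s hs => ?_
    · obtain ⟨hwM, a, ha, hlarge, c, rfl, hc⟩ := hS w hw
      obtain ⟨hlow, hupp⟩ := mem_Ioc.1 hwM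
      have hw0 : a * c ≠ 0 := gaussNorm_pos.1 (by omega)
      have haM := (gaussNorm_le_of_dvd hw0 (dvd_mul_right a c)).trans hupp
      exact ⟨a, mem_filter.2 ⟨mem_smoothLE.2 ⟨haM, ha⟩, hlarge⟩, c, rfl, hc⟩
    · have ha0 := (mem_smoothLE.1 (mem_filter.1 ha).1).2.1
      refine (card_isRough_le (X := X) (Y := Y) hz (gaussNorm_pos.2 ha0).ne' (fun c hc => ?_)
        fun c hc => ?_).trans ?_
      · exact map_mul gaussNorm a c ▸ (hS _ (hs c hc).1).1
      · rw [Real.sq_sqrt hm0.le]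
        exact (hs c hc).2
      · rw [div_eq_mul_inv (Y : ℝ)]
        gcongr
  rw [← mul_sum] at hcount
  refine hcount.trans ?_
  gcongr
  refine sum_div_gaussNorm_add_one_le hb hQ (Nat.cast_nonneg Y) hM (filter_subset _ _)
    fun a ha => ?_
  rw [hQD]
  exact_mod_cast (mem_filter.1 ha).2

theorem exists_smoothMoment_le_mul_rpow (m : ℕ) {b η : ℝ} (hb0 : 0 ≤ b) (hb : b < 1) (hη : 0 < η) :
    ∃ K : ℝ, 0 < K ∧ ∀ n : ℕ, n ≠ 0 → smoothMoment m n b ≤ K * (n : ℝ) ^ η := by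
  refine ⟨Real.exp (eulerLogDeriv m b * b) * (8 * (1 + η⁻¹)), by positivity, fun n hn => ?_⟩
  have hn1 : (1 : ℝ) ≤ n := by exact_mod_cast Nat.one_le_iff_ne_zero.2 hn
  have hlog := Real.log_le_rpow_div (Nat.cast_nonneg n) hη
  have hone := Real.one_le_rpow hn1 hη.le
  refine (smoothMoment_le m n hb0 hb).trans ?_
  rw [mul_assoc, mul_assoc]
  gcongr
  rw [div_eq_mul_inv] at hlog
  linarith

theorem exists_card_hasLargeSmoothPart_le {κ m : ℕ} (hκ : κ ≠ 0)
    (hm : 6 * κ ≤ Real.log m) : ∃ C : ℝ, 0 < C ∧ ∀ {D X Y : ℕ}, D ≠ 0 → D ≤ Y → X + Y ≤ D ^ κ →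
    ∀ S : Finset GaussianInt, (∀ w ∈ S, gaussNorm w ∈ Ioc X (X + Y) ∧ HasLargeSmoothPart m D w) →
      (#S : ℝ) ≤ C * Y := by
  have hκ1 : (1 : ℝ) ≤ κ := by exact_mod_cast Nat.one_le_iff_ne_zero.2 hκ
  have hm1 : 1 < m := by
    by_contra! hm1
    linarith [Real.log_nonpos m.cast_nonneg (by exact_mod_cast hm1)]
  set b : ℝ := 1 - (3 * κ : ℝ)⁻¹ with hb
  have hinv : (3 * κ : ℝ)⁻¹ ≤ 1 := inv_le_one_of_one_le₀ (by linarith)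
  have hinv0 : (0 : ℝ) < (3 * κ : ℝ)⁻¹ := by positivity
  obtain ⟨K, hK, hmoment⟩ := exists_smoothMoment_le_mul_rpow m (b := b) (η := 1 - b)
    (by linarith) (by linarith) (by linarith)
  refine ⟨4 * K * (m + 1), by positivity, fun {D X Y} hD hDY hM S hS => ?_⟩
  have hDpos : (0 : ℝ) < D := by exact_mod_cast Nat.pos_of_ne_zero hD
  have hMpos : (0 : ℝ) < (X + Y : ℕ) := by exact_mod_cast (by omega : 0 < X + Y)
  have hlogM : Real.log (X + Y : ℕ) ≤ κ * Real.log D := by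
    rw [← Real.log_pow]
    exact Real.log_le_log hMpos (by exact_mod_cast hM)
  set Q : ℝ := Real.exp (Real.log D / 3) with hQ
  have hQ1 : 1 ≤ Q := Real.one_le_exp (by have := Real.log_natCast_nonneg D; positivity)
  have hQD : Q ^ 3 = D := by
    rw [hQ, ← Real.exp_nat_mul, Nat.cast_ofNat, mul_div_cancel₀ _ (by norm_num), Real.exp_log hDpos]
  have hMQ : ((X + Y : ℕ) : ℝ) ^ (1 - b) ≤ Q := by
    rw [Real.rpow_def_of_pos hMpos, Real.exp_le_exp, hb, sub_sub_cancel, ← div_eq_mul_inv,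
      div_le_iff₀ (by positivity)]
    linear_combination hlogM
  calc (#S : ℝ) ≤ 4 * Q * ((Y * (m / Q ^ 2) + Q) * smoothMoment m (X + Y) b) := by
        refine card_hasLargeSmoothPart_le hm1 (by linarith) ?_ (by positivity) hQD hMQ
          (by omega) S hS
        rw [hb, sub_sub_cancel, inv_mul_eq_div, le_div_iff₀ (by positivity)]
        linarith
    _ ≤ 4 * Q * ((Y * (m / Q ^ 2) + Q) * (K * Q)) := by
        gcongr
        exact (hmoment _ (by omega)).trans (by gcongr)
    _ = 4 * K * (m * Y + Q ^ 3) := by field_simp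
    _ ≤ 4 * K * (m * Y + Y) := by
        rw [hQD]
        gcongr
    _ = _ := by ring

/-! ### Gaussian integers with norm in a short interval -/

theorem exists_prime_dvd_forall_gaussNorm_le {c : GaussianInt} (hc : c ≠ 0) (hcu : ¬IsUnit c) :
    ∃ q, Prime q ∧ q ∣ c ∧ ∀ p, Prime p → p ∣ c → gaussNorm q ≤ gaussNorm p := by
  obtain ⟨p, hp, hpc⟩ := WfDvdMonoid.exists_irreducible_factor hcu hc
  obtain ⟨q, ⟨hq, hqc⟩, hmin⟩ := (wellFounded_lt.onFun (f := gaussNorm)).has_min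
    {q | Prime q ∧ q ∣ c} ⟨p, hp.prime, hpc⟩
  exact ⟨q, hq, hqc, fun p hp hpc => not_lt.1 (hmin p ⟨hp, hpc⟩)⟩

/-- `w = a * c`, and no prime dividing `a` has larger norm than a prime dividing `c`. -/
def IsOrderedFactorization (w a c : GaussianInt) : Prop :=
  w = a * c ∧ ∀ p q, Prime p → Prime q → p ∣ a → q ∣ c → gaussNorm p ≤ gaussNorm q

theorem exists_isOrderedFactorization_mul_prime {w a c : GaussianInt} (hc : c ≠ 0)
    (hcu : ¬IsUnit c) (hw : IsOrderedFactorization w a c) :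
    ∃ q b, Prime q ∧ c = q * b ∧ IsOrderedFactorization w (a * q) b ∧
      ∀ p, Prime p → p ∣ c → gaussNorm q ≤ gaussNorm p := by
  obtain ⟨q, hq, ⟨b, rfl⟩, hmin⟩ := exists_prime_dvd_forall_gaussNorm_le hc hcu
  refine ⟨q, b, hq, rfl, ⟨by rw [hw.1, mul_assoc], fun p p' hp hp' hpaq hp'b => ?_⟩, hmin⟩
  rcases hp.dvd_or_dvd hpaq with hpa | hpq
  · exact hw.2 p p' hp hp' hpa (hp'b.mul_left q)
  · exact (gaussNorm_le_of_dvd hq.ne_zero hpq).trans (hmin p' hp' (hp'b.mul_left q))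

/- Collect the prime factors of `w` in order of increasing norm as long as the product has norm at
most `D`; then `q` is the first prime left out. -/
theorem exists_isOrderedFactorization_lt_mul_gaussNorm {D : ℕ} {w : GaussianInt} (hD : D ≠ 0)
    (hw : D < gaussNorm w) :
    ∃ a c q, IsOrderedFactorization w a c ∧ gaussNorm a ≤ D ∧ Prime q ∧ q ∣ c ∧
      (∀ p, Prime p → p ∣ c → gaussNorm q ≤ gaussNorm p) ∧ D < gaussNorm a * gaussNorm q := by
  classical
  have hone : IsOrderedFactorization w 1 w :=
    ⟨(one_mul w).symm, fun p _ hp _ hp1 _ => absurd (isUnit_of_dvd_one hp1) hp.not_isUnit⟩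
  obtain ⟨a, ha, hmax⟩ := exists_max_image
    ((normLE D).filter fun a => ∃ c, IsOrderedFactorization w a c) gaussNorm
    ⟨1, mem_filter.2 ⟨mem_normLE.2 (by rw [map_one]; omega), w, hone⟩⟩
  obtain ⟨haD, c, hac⟩ := mem_filter.1 ha
  rw [mem_normLE] at haD
  have hw0 : a * c ≠ 0 := hac.1 ▸ gaussNorm_pos.1 (by omega)
  have hcu : ¬IsUnit c := by
    intro hcu
    rw [hac.1, map_mul, gaussNorm_eq_one.2 hcu] at hw
    omega
  obtain ⟨q, b, hq, rfl, haq, hmin⟩ :=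
    exists_isOrderedFactorization_mul_prime (right_ne_zero_of_mul hw0) hcu hac
  refine ⟨a, q * b, q, hac, haD, hq, dvd_mul_right q b, hmin, ?_⟩
  by_contra! hle
  have hbig := hmax (a * q) (mem_filter.2 ⟨mem_normLE.2 (by rwa [map_mul]), b, haq⟩)
  rw [map_mul] at hbig
  nlinarith [two_le_gaussNorm_of_prime hq, gaussNorm_pos.2 (left_ne_zero_of_mul hw0)]

theorem hasLevel_of_pow_le {D r : ℕ} {a c q w : GaussianInt} (hr : r ≠ 0)
    (hw : IsOrderedFactorization w a c) (ha0 : a ≠ 0) (haD : gaussNorm a ≤ D) (hq : Prime q)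
    (hqc : q ∣ c) (hmin : ∀ p, Prime p → p ∣ c → gaussNorm q ≤ gaussNorm p)
    (hD : D < gaussNorm a * gaussNorm q) (hqD : gaussNorm q ^ r ≤ D)
    (hDq : D < gaussNorm q ^ (r + 1)) : HasLevel D r w := by
  refine ⟨a, mem_smoothLE.2 ⟨haD, ha0, fun p hp hpa => ?_⟩, ?_, c, hw.1, fun p hp hpc => ?_⟩
  · rw [Nat.le_nthRoot_iff hr]
    exact (Nat.pow_le_pow_left (hw.2 p q hp hq hpa hqc) r).trans hqD
  · calc D ^ r ≤ (gaussNorm a * gaussNorm q) ^ r := Nat.pow_le_pow_left hD.le r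
      _ = gaussNorm q ^ r * gaussNorm a ^ r := by rw [mul_pow, mul_comm]
      _ ≤ D * gaussNorm a ^ r := Nat.mul_le_mul_right _ hqD
  · refine lt_of_pow_lt_pow_left₀ (r + 1) (Nat.cast_nonneg _) ?_
    rw [Real.rpow_inv_natCast_pow D.cast_nonneg r.succ_ne_zero]
    exact_mod_cast hDq.trans_le (Nat.pow_le_pow_left (hmin p hp hpc) (r + 1))

theorem hasLevel_one_of_lt {D : ℕ} {a c w : GaussianInt} (hw : w = a * c)
    (ha0 : a ≠ 0) (haD : gaussNorm a ≤ D) (hc : IsRough D c) : HasLevel D 1 w := by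
  have hapos := gaussNorm_pos.2 ha0
  refine ⟨a, mem_smoothLE.2 ⟨haD, ha0, fun p _ hpa => ?_⟩, ?_, c, hw, fun p hp hpc => ?_⟩
  · rw [Nat.le_nthRoot_iff one_ne_zero, pow_one]
    exact (gaussNorm_le_of_dvd ha0 hpa).trans haD
  · rw [pow_one, pow_one]
    exact Nat.le_mul_of_pos_right D hapos
  · refine lt_of_le_of_lt (Real.rpow_le_self_of_one_le ?_ (by norm_num)) (hc p hp hpc)
    exact_mod_cast hapos.trans_le haD

theorem hasLargeSmoothPart_of_eq_mul {m D : ℕ} {a c w : GaussianInt} (hw0 : w ≠ 0)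
    (hw : w = a * c) (ha : IsSmooth m a) (hD : D ≤ gaussNorm a * m) :
    HasLargeSmoothPart m D w := by
  have hc0 : c ≠ 0 := right_ne_zero_of_mul (hw ▸ hw0)
  obtain ⟨s, t, rfl, hs, ht⟩ := exists_eq_isSmooth_mul_isRough m hc0
  refine ⟨a * s, ha.mul hs, hD.trans ?_, t, by rw [hw, mul_assoc], ht⟩
  rw [map_mul]
  exact Nat.mul_le_mul_right m (Nat.le_mul_of_pos_right _ (gaussNorm_pos.2 hs.1))

theorem hasLevel_or_hasLargeSmoothPart {m D : ℕ} {w : GaussianInt} (hm : 1 < m) (hmD : m ≤ D)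
    (hw : D < gaussNorm w) :
    (∃ r, r ≠ 0 ∧ m ^ r ≤ D ∧ HasLevel D r w) ∨ HasLargeSmoothPart m D w := by
  obtain ⟨a, c, q, hac, haD, hq, hqc, hmin, hD⟩ :=
    exists_isOrderedFactorization_lt_mul_gaussNorm (by omega) hw
  have hw0 : w ≠ 0 := gaussNorm_pos.1 (by omega)
  have ha0 : a ≠ 0 := left_ne_zero_of_mul (hac.1 ▸ hw0)
  rcases le_or_gt (gaussNorm q) m with hqm | hmq
  · refine Or.inr (hasLargeSmoothPart_of_eq_mul hw0 hac.1
      ⟨ha0, fun p hp hpa => (hac.2 p q hp hq hpa hqc).trans hqm⟩ ?_)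
    exact hD.le.trans (Nat.mul_le_mul_left _ hqm)
  rcases le_or_gt (gaussNorm q) D with hqD | hDq
  · have hpow : gaussNorm q ^ Nat.log (gaussNorm q) D ≤ D := Nat.pow_log_le_self _ (by omega)
    have hlog : Nat.log (gaussNorm q) D ≠ 0 := (Nat.log_pos (by omega) hqD).ne'
    refine Or.inl ⟨_, hlog, (Nat.pow_le_pow_left hmq.le _).trans hpow, ?_⟩
    exact hasLevel_of_pow_le hlog hac ha0 haD hq hqc hmin hD hpow
      (Nat.lt_pow_succ_log_self (by omega) D)
  · refine Or.inl ⟨1, one_ne_zero, by rwa [pow_one], hasLevel_one_of_lt hac.1 ha0 haD ?_⟩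
    exact fun p hp hpc => by exact_mod_cast hDq.trans_le (hmin p hp hpc)

theorem card_le_of_gaussNorm_le {n : ℕ} (hn : 1 ≤ n) {S : Finset GaussianInt}
    (hS : ∀ w ∈ S, gaussNorm w ≤ n) : #S ≤ 9 * n :=
  (card_le_card fun w hw => mem_normLE.2 (hS w hw)).trans (card_normLE_le hn)

theorem card_le_sum_hasLevel_add_hasLargeSmoothPart {m D : ℕ} (hm : 1 < m) (hmD : m ≤ D)
    {S : Finset GaussianInt} (hS : ∀ w ∈ S, D < gaussNorm w)
    [∀ r, DecidablePred (HasLevel D r)] [DecidablePred (HasLargeSmoothPart m D)] :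
    #S ≤ ∑ r ∈ Icc 1 (Nat.log m D), #{w ∈ S | HasLevel D r w} +
      #{w ∈ S | HasLargeSmoothPart m D w} := by
  refine (card_le_card fun w hw => ?_).trans
    ((card_union_le _ _).trans (Nat.add_le_add_right card_biUnion_le _))
  rw [mem_union, mem_biUnion]
  refine (hasLevel_or_hasLargeSmoothPart hm hmD (hS w hw)).imp ?_ fun h => mem_filter.2 ⟨hw, h⟩
  rintro ⟨r, hr, hrD, h⟩
  exact ⟨r, mem_Icc.2 ⟨Nat.one_le_iff_ne_zero.2 hr, Nat.le_log_of_pow_le hm hrD⟩,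
    mem_filter.2 ⟨hw, h⟩⟩

theorem exists_card_le_of_gaussNorm_mem_Ioc_of_le_pow {κ m : ℕ} (hκ : κ ≠ 0)
    (hm : 2 * (7 * κ + 2) ≤ Real.log m) : ∃ C : ℝ, 0 < C ∧ ∀ {D X Y : ℕ}, m ≤ D → D ≤ X →
    D ^ 2 ≤ Y → X + Y ≤ D ^ κ → ∀ S : Finset GaussianInt,
    (∀ w ∈ S, gaussNorm w ∈ Ioc X (X + Y)) → (#S : ℝ) ≤ C * Y := by
  classical
  obtain ⟨C₁, hC₁, hlevel⟩ := exists_card_hasLevel_le κ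
  obtain ⟨C₂, hC₂, hsmooth⟩ := exists_card_hasLargeSmoothPart_le (m := m) hκ (by linarith)
  have hm1 : 1 < m := by
    by_contra! hm1
    linarith [Real.log_nonpos m.cast_nonneg (by exact_mod_cast hm1), κ.cast_nonneg (α := ℝ)]
  refine ⟨C₁ * ∑' r : ℕ, Real.exp (-r) + C₂, by positivity, fun {D X Y} hmD hDX hDY hM S hS => ?_⟩
  have hlog : ∀ r ∈ Icc 1 (Nat.log m D), 2 * (7 * κ + 2) * r ≤ Real.log D := fun r hr => by
    calc 2 * (7 * κ + 2) * r ≤ Real.log m * r := by gcongr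
      _ = Real.log (m ^ r : ℕ) := by rw [Nat.cast_pow, Real.log_pow, mul_comm]
      _ ≤ Real.log D := by
          refine Real.log_le_log (by positivity) ?_
          exact_mod_cast Nat.pow_le_of_le_log (by omega) (mem_Icc.1 hr).2
  have hcover := card_le_sum_hasLevel_add_hasLargeSmoothPart hm1 hmD fun w hw =>
    hDX.trans_lt (mem_Ioc.1 (hS w hw)).1
  have hsum : ∑ r ∈ Icc 1 (Nat.log m D), (#{w ∈ S | HasLevel D r w} : ℝ) ≤
      C₁ * Y * ∑' r : ℕ, Real.exp (-r) := by
    calc _ ≤ ∑ r ∈ Icc 1 (Nat.log m D), C₁ * Y * Real.exp (-r) := sum_le_sum fun r hr =>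
          hlevel (by have := mem_Icc.1 hr; omega) (hlog r hr) hDY hM _ fun w hw =>
            ⟨hS w (mem_filter.1 hw).1, (mem_filter.1 hw).2⟩
      _ ≤ _ := by
          rw [← mul_sum]
          gcongr
          exact Real.summable_exp_neg_nat.sum_le_tsum _ fun r _ => (Real.exp_pos _).le
  have hlast : (#{w ∈ S | HasLargeSmoothPart m D w} : ℝ) ≤ C₂ * Y :=
    hsmooth (by omega) ((Nat.le_self_pow two_ne_zero D).trans hDY) hM _ fun w hw =>
      ⟨hS w (mem_filter.1 hw).1, (mem_filter.1 hw).2⟩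
  calc (#S : ℝ) ≤ ∑ r ∈ Icc 1 (Nat.log m D), (#{w ∈ S | HasLevel D r w} : ℝ) +
        #{w ∈ S | HasLargeSmoothPart m D w} := by exact_mod_cast hcover
    _ ≤ C₁ * Y * ∑' r : ℕ, Real.exp (-r) + C₂ * Y := add_le_add hsum hlast
    _ = _ := by ring

theorem le_sqrt_pow_four {n : ℕ} (hn : 4 ≤ n) : n ≤ Nat.sqrt n ^ 4 := by
  have htwo : 2 ≤ Nat.sqrt n := Nat.le_sqrt.2 hn
  have hlt : n < (Nat.sqrt n + 1) ^ 2 := Nat.lt_succ_sqrt' n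
  have hle : Nat.sqrt n + 1 ≤ Nat.sqrt n ^ 2 := by nlinarith
  calc n ≤ (Nat.sqrt n ^ 2) ^ 2 := hlt.le.trans (Nat.pow_le_pow_left hle 2)
    _ = Nat.sqrt n ^ 4 := by rw [← pow_mul]

theorem exists_card_le_of_gaussNorm_mem_Ioc (k : ℕ) : ∃ C : ℝ, 0 < C ∧ ∀ {X Y : ℕ},
    X + Y ≤ Y ^ k → ∀ S : Finset GaussianInt, (∀ w ∈ S, gaussNorm w ∈ Ioc X (X + Y)) →
      (#S : ℝ) ≤ C * Y := by
  obtain ⟨m, hm⟩ := exists_nat_ge (Real.exp (2 * (7 * (4 * (k + 1) : ℕ) + 2)))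
  obtain ⟨C, hC, hmain⟩ := exists_card_le_of_gaussNorm_mem_Ioc_of_le_pow (κ := 4 * (k + 1)) (m := m)
    (by omega) ((Real.le_log_iff_exp_le ((Real.exp_pos _).trans_le hm)).2 hm)
  set M : ℕ := ((m + 2) ^ 2) ^ k
  refine ⟨C + 9 * M + 18, by positivity, fun {X Y} hXY S hS => ?_⟩
  rcases S.eq_empty_or_nonempty with rfl | ⟨v, hv⟩
  · rw [card_empty, Nat.cast_zero]
    positivity
  have hY : 1 ≤ Y := by have := mem_Ioc.1 (hS v hv); omega
  have htriv : #S ≤ 9 * (X + Y) :=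
    card_le_of_gaussNorm_le (by omega) fun w hw => (mem_Ioc.1 (hS w hw)).2
  rcases lt_or_ge Y ((m + 2) ^ 2) with hYm | hYm
  · have hsmall : #S ≤ 9 * M * Y := by
      calc #S ≤ 9 * Y ^ k := htriv.trans (Nat.mul_le_mul_left 9 hXY)
        _ ≤ 9 * M := Nat.mul_le_mul_left 9 (Nat.pow_le_pow_left hYm.le k)
        _ ≤ 9 * M * Y := Nat.le_mul_of_pos_right _ hY
    refine (Nat.cast_le.2 hsmall).trans ?_
    push_cast
    gcongr
    linarith
  rcases lt_or_ge X Y with hX | hX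
  · refine (Nat.cast_le.2 (htriv.trans (by omega : 9 * (X + Y) ≤ 18 * Y))).trans ?_
    push_cast
    gcongr
    linarith [show (0 : ℝ) ≤ 9 * M by positivity]
  · have hsqrt : m + 2 ≤ Nat.sqrt Y := Nat.le_sqrt'.2 hYm
    refine (hmain (by omega) ((Nat.sqrt_le_self Y).trans hX) (Nat.sqrt_le' Y) ?_ S hS).trans ?_
    · calc X + Y ≤ (Nat.sqrt Y ^ 4) ^ k :=
            hXY.trans (Nat.pow_le_pow_left (le_sqrt_pow_four (by nlinarith)) k)
        _ = Nat.sqrt Y ^ (4 * k) := by rw [← pow_mul]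
        _ ≤ Nat.sqrt Y ^ (4 * (k + 1)) := Nat.pow_le_pow_right (by omega) (by omega)
    · gcongr
      linarith [show (0 : ℝ) ≤ 9 * M by positivity]

theorem le_pow_ceil_inv {t δ y : ℝ} (ht : 0 ≤ t) (hδ : 0 < δ) (hy : 1 ≤ y) (hty : t ^ δ ≤ y) :
    t ≤ y ^ ⌈δ⁻¹⌉₊ := by
  calc t = (t ^ δ) ^ δ⁻¹ := (Real.rpow_rpow_inv ht hδ.ne').symm
    _ ≤ y ^ δ⁻¹ := by gcongr
    _ ≤ y ^ (⌈δ⁻¹⌉₊ : ℝ) := Real.rpow_le_rpow_of_exponent_le hy (Nat.le_ceil _)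
    _ = y ^ ⌈δ⁻¹⌉₊ := Real.rpow_natCast y _

theorem mem_Ioc_of_abs_sub_le {n : ℕ} {t K : ℝ} (hn : n ≠ 0) (hK : |n - t| ≤ K) :
    n ∈ Ioc (⌈t - K⌉₊ - 1) (⌈t - K⌉₊ - 1 + (⌈2 * K⌉₊ + 1)) := by
  obtain ⟨hlow, hupp⟩ := abs_le.1 hK
  have hceil : ⌈t - K⌉₊ ≤ n := Nat.ceil_le.2 (by linarith)
  have hle : n ≤ ⌈t - K⌉₊ + ⌈2 * K⌉₊ := by
    rify
    linarith [Nat.le_ceil (t - K), Nat.le_ceil (2 * K)]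
  rw [mem_Ioc]
  omega

theorem exists_card_le_of_abs_gaussNorm_sub_le {δ : ℝ} (hδ : 0 < δ) : ∃ C : ℝ, 0 < C ∧
    ∀ {t K : ℝ}, 0 ≤ t → 0 ≤ K → ∀ S : Finset GaussianInt, (∀ w ∈ S, |gaussNorm w - t| ≤ K) →
      (#S : ℝ) ≤ C * (K + 1 + t ^ δ) := by
  classical
  obtain ⟨C, hC, hshort⟩ := exists_card_le_of_gaussNorm_mem_Ioc (⌈δ⁻¹⌉₊ + 1)
  refine ⟨4 * C + 1, by positivity, fun {t K} ht hK S hS => ?_⟩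
  have hpow : 0 ≤ t ^ δ := by positivity
  set R : ℝ := K + 1 + t ^ δ
  set X : ℕ := ⌈t - R⌉₊ - 1
  set Y : ℕ := ⌈2 * R⌉₊ + 1 with hY
  have hRY : 2 * R ≤ Y := by rw [hY]; push_cast; linarith [Nat.le_ceil (2 * R)]
  have hYR : (Y : ℝ) ≤ 4 * R := by
    rw [hY]
    push_cast
    linarith [Nat.ceil_lt_add_one (by linarith : 0 ≤ 2 * R)]
  have hXt : (X : ℝ) ≤ t := by
    rcases Nat.eq_zero_or_pos X with h0 | hpos
    · simpa [h0] using ht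
    · have hlt : X < ⌈t - R⌉₊ := by omega
      linarith [Nat.lt_ceil.1 hlt]
  have hXY : X + Y ≤ Y ^ (⌈δ⁻¹⌉₊ + 1) := by
    have hXpow : X ≤ Y ^ ⌈δ⁻¹⌉₊ := by
      exact_mod_cast hXt.trans (le_pow_ceil_inv ht hδ (by linarith) (by linarith : t ^ δ ≤ (Y : ℝ)))
    have hYpow : Y ≤ Y ^ ⌈δ⁻¹⌉₊ := Nat.le_self_pow (Nat.ceil_pos.2 (inv_pos.2 hδ)).ne' Y
    have hY2 : 2 ≤ Y := by exact_mod_cast (by linarith : (2 : ℝ) ≤ Y)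
    rw [pow_succ]
    nlinarith
  have hmain := hshort hXY (S.erase 0) fun w hw => by
    obtain ⟨hw0, hwS⟩ := mem_erase.1 hw
    exact mem_Ioc_of_abs_sub_le (gaussNorm_pos.2 hw0).ne' ((hS w hwS).trans (by linarith))
  have hcard : (#S : ℝ) ≤ #(S.erase 0) + 1 := by
    exact_mod_cast Nat.sub_le_iff_le_add.1 (pred_card_le_card_erase (s := S) (a := 0))
  nlinarith

/-! ### Lattice points in annuli -/

/-- The lattice point `ξ` as the Gaussian integer `ξ 0 + ξ 1 * i`. -/
def toGaussianInt (ξ : Fin 2 → ℤ) : GaussianInt := ⟨ξ 0, ξ 1⟩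

theorem toGaussianInt_injective : Function.Injective toGaussianInt := fun ξ η h => by
  ext i
  fin_cases i
  · exact congrArg Zsqrtd.re h
  · exact congrArg Zsqrtd.im h

theorem qf_eq_mul_gaussNorm (ξ : Fin 2 → ℤ) :
    qf ξ = 4 * Real.pi ^ 2 * gaussNorm (toGaussianInt ξ) := by
  simp [qf, gaussNorm_eq_natAbs_sq_add, toGaussianInt, Nat.cast_natAbs]

theorem exists_card_le_of_abs_qf_sub_le {δ : ℝ} (hδ : 0 < δ) : ∃ C : ℝ, 0 < C ∧
    ∀ {lam K : ℝ}, 1 ≤ lam → 0 ≤ K → ∀ S : Finset (Fin 2 → ℤ), (∀ ξ ∈ S, |qf ξ - lam| ≤ K) →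
      (#S : ℝ) ≤ C * (K + lam ^ δ) := by
  classical
  obtain ⟨C, hC, hcount⟩ := exists_card_le_of_abs_gaussNorm_sub_le hδ
  refine ⟨2 * C, by positivity, fun {lam K} hlam hK S hS => ?_⟩
  set s : ℝ := 4 * Real.pi ^ 2
  have hs : 1 ≤ s := by nlinarith [Real.pi_gt_three]
  have hclose : ∀ w ∈ S.image toGaussianInt, |gaussNorm w - lam / s| ≤ K := by
    simp only [forall_mem_image]
    intro ξ hξ
    calc |gaussNorm (toGaussianInt ξ) - lam / s| ≤ s * |gaussNorm (toGaussianInt ξ) - lam / s| :=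
          le_mul_of_one_le_left (abs_nonneg _) hs
      _ = |qf ξ - lam| := by
          rw [qf_eq_mul_gaussNorm, ← abs_of_nonneg (by positivity : 0 ≤ s), ← abs_mul, mul_sub,
            abs_of_nonneg (by positivity : 0 ≤ s), mul_div_cancel₀ lam (by positivity)]
      _ ≤ K := hS ξ hξ
  have hone : 1 ≤ lam ^ δ := Real.one_le_rpow hlam hδ.le
  calc (#S : ℝ) = #(S.image toGaussianInt) := by
        rw [card_image_of_injective S toGaussianInt_injective]
    _ ≤ C * (K + 1 + (lam / s) ^ δ) := hcount (by positivity) hK _ hclose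
    _ ≤ C * (K + lam ^ δ + (K + lam ^ δ)) := by
        gcongr ?_ * (?_ + ?_)
        · linarith
        · have : (lam / s) ^ δ ≤ lam ^ δ := by
            gcongr
            exact div_le_self (by positivity) hs
          linarith
    _ = _ := by ring

/-! ### Dyadic summation -/

theorem inv_sq_le_sum_dyadic {v L : ℝ} (hL : 0 < L) (hv : L < v) {J : ℕ} (hJ : v < 2 ^ J * L) :
    (v ^ 2)⁻¹ ≤ ∑ j ∈ range J, if v ≤ 2 ^ (j + 1) * L then ((2 ^ j * L) ^ 2)⁻¹ else 0 := by
  obtain ⟨j, hlow, hupp⟩ := exists_nat_pow_near ((one_le_div hL).2 hv.le) one_lt_two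
  rw [le_div_iff₀ hL] at hlow
  rw [div_lt_iff₀ hL] at hupp
  have hjJ : j < J :=
    (pow_lt_pow_iff_right₀ one_lt_two).1 (lt_of_mul_lt_mul_right (hlow.trans_lt hJ) hL.le)
  refine le_trans ?_ (single_le_sum (fun i _ => ?_) (mem_range.2 hjJ))
  · rw [if_pos hupp.le]
    gcongr
  · split_ifs <;> positivity

section Dyadic

variable {ι : Type*} {v : ι → ℝ} {A B L : ℝ}

theorem sum_inv_sq_shell_le (hB : 0 ≤ B) (hL : 0 < L)
    (hcount : ∀ K, 0 ≤ K → ∀ S : Finset ι, (∀ i ∈ S, v i ≤ K) → (#S : ℝ) ≤ A * K + B)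
    (S : Finset ι) (j : ℕ) :
    (∑ i ∈ S, if v i ≤ 2 ^ (j + 1) * L then ((2 ^ j * L) ^ 2)⁻¹ else 0) ≤
      (2 * A * L⁻¹ + B * (L ^ 2)⁻¹) * (1 / 2) ^ j := by
  have hcard := hcount (2 ^ (j + 1) * L) (by positivity) {i ∈ S | v i ≤ 2 ^ (j + 1) * L}
    fun i hi => (mem_filter.1 hi).2
  rw [← sum_filter, sum_const, nsmul_eq_mul]
  calc _ ≤ (A * (2 ^ (j + 1) * L) + B) * ((2 ^ j * L) ^ 2)⁻¹ := by gcongr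
    _ = 2 * A * L⁻¹ * (1 / 2) ^ j + B * (L ^ 2)⁻¹ * ((1 / 2) ^ j * (1 / 2) ^ j) := by
        rw [one_div, inv_pow, pow_succ]
        field_simp
    _ ≤ 2 * A * L⁻¹ * (1 / 2) ^ j + B * (L ^ 2)⁻¹ * (1 / 2) ^ j := by
        gcongr
        exact mul_le_of_le_one_left (by positivity) (pow_le_one₀ (by norm_num) (by norm_num))
    _ = _ := by ring

theorem sum_inv_sq_le_of_card_le (hA : 0 ≤ A) (hB : 0 ≤ B) (hL : 0 < L)
    (hcount : ∀ K, 0 ≤ K → ∀ S : Finset ι, (∀ i ∈ S, v i ≤ K) → (#S : ℝ) ≤ A * K + B)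
    (S : Finset ι) :
    (∑ i ∈ S, if L < v i then (v i ^ 2)⁻¹ else 0) ≤ 4 * (A * L⁻¹ + B * (L ^ 2)⁻¹) := by
  classical
  obtain ⟨M, hM⟩ := (S.image v).exists_le
  obtain ⟨J, hJ⟩ := pow_unbounded_of_one_lt (M / L) one_lt_two
  have hvJ : ∀ i ∈ S, v i < 2 ^ J * L := fun i hi =>
    (hM _ (mem_image_of_mem v hi)).trans_lt ((div_lt_iff₀ hL).1 hJ)
  calc _ ≤ ∑ i ∈ S, ∑ j ∈ range J, if v i ≤ 2 ^ (j + 1) * L then ((2 ^ j * L) ^ 2)⁻¹ else 0 := by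
        refine sum_le_sum fun i hi => ?_
        split_ifs with hLv
        · exact inv_sq_le_sum_dyadic hL hLv (hvJ i hi)
        · exact sum_nonneg fun j _ => by split_ifs <;> positivity
    _ ≤ ∑ j ∈ range J, (2 * A * L⁻¹ + B * (L ^ 2)⁻¹) * (1 / 2) ^ j := by
        rw [sum_comm]
        exact sum_le_sum fun j _ => sum_inv_sq_shell_le hB hL hcount S j
    _ ≤ (2 * A * L⁻¹ + B * (L ^ 2)⁻¹) * 2 := by
        rw [← mul_sum]
        gcongr
        exact sum_geometric_two_le J
    _ ≤ _ := by linarith [show 0 ≤ B * (L ^ 2)⁻¹ by positivity]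

end Dyadic

theorem annulus_complement_sum_bound_general {δ : ℝ} (hδ : 0 < δ) :
    ∃ C : ℝ, 0 < C ∧ ∀ lam : ℝ, 1 ≤ lam → ∀ L : ℝ, 0 < L →
      Summable (fun ξ : Fin 2 → ℤ => if L < |qf ξ - lam| then ((qf ξ - lam) ^ 2)⁻¹ else 0) ∧
        (∑' ξ : Fin 2 → ℤ, if L < |qf ξ - lam| then ((qf ξ - lam) ^ 2)⁻¹ else 0)
          ≤ C * (L⁻¹ + lam ^ δ * (L ^ 2)⁻¹) := by
  obtain ⟨C, hC, hcount⟩ := exists_card_le_of_abs_qf_sub_le hδ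
  refine ⟨4 * C, by positivity, fun lam hlam L hL => ?_⟩
  have hsum : ∀ S : Finset (Fin 2 → ℤ),
      (∑ ξ ∈ S, if L < |qf ξ - lam| then ((qf ξ - lam) ^ 2)⁻¹ else 0) ≤
        4 * C * (L⁻¹ + lam ^ δ * (L ^ 2)⁻¹) := fun S => by
    have hpow : 0 ≤ lam ^ δ := by positivity
    have hdyadic := sum_inv_sq_le_of_card_le (v := fun ξ => |qf ξ - lam|) hC.le
      (mul_nonneg hC.le hpow) hL (fun K hK T hT => mul_add C K _ ▸ hcount hlam hK T hT) S
    simp only [sq_abs] at hdyadic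
    linarith
  have hnonneg : ∀ ξ, 0 ≤ if L < |qf ξ - lam| then ((qf ξ - lam) ^ 2)⁻¹ else 0 := fun ξ => by
    split_ifs <;> positivity
  exact ⟨summable_of_sum_le hnonneg hsum, Real.tsum_le_of_sum_le hnonneg hsum⟩

/-- The lattice sum over the complement of the annulus of width `L`
around `λ` is `O_ε(L⁻¹ + λ^{θ+ε}L⁻²)`. -/
theorem annulus_complement_sum_bound (ε : ℝ) (hε : 0 < ε) :
    ∃ C : ℝ, 0 < C ∧
      ∀ lam : ℝ, 2 ≤ lam → ∀ L : ℝ, 1 ≤ L → L ≤ lam ^ ((1:ℝ)/2) →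
        (∑' ξ : Fin 2 → ℤ, if L < |qf ξ - lam| then ((qf ξ - lam) ^ 2)⁻¹ else 0)
          ≤ C * (L⁻¹ + lam ^ (θH + ε) * (L ^ 2)⁻¹) := by
  obtain ⟨C, hC, hbound⟩ :=
    annulus_complement_sum_bound_general (δ := θH + ε) (by unfold θH; positivity)
  exact ⟨C, hC, fun lam hlam L hL _ => (hbound lam (by linarith) L (by linarith)).2⟩
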